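/- Let 0 < ε < 1 and let q : ℂ → ℂ be compactly supported and Hölder continuous with exponent ε (i.e. there is C ≥ 0 with |q(z) − q(z')| ≤ C|z − z'|^ε for all z, z'). Then for every r with 2 < r < ∞ and every k ∈ ℂ there exists exactly one quadruple of real-differentiable functions m₁₁, m₁₂, m₂₁, m₂₂ : ℂ → ℂ such that: (a) the system ∂̄m₁₁ = q·m₂₁, ∂m₂₁ + i·k·m₂₁ = conj(q)·m₁₁, ∂̄m₁₂ − i·k·m₁₂ = q·m₂₂, ∂m₂₂ = conj(q)·m₁₂ holds on all of ℂ; and (b) the functions m₁₁ − 1, m₁₂, m₂₁, m₂₂ − 1 all belong to L^r(ℂ) (with respect to Lebesgue measure) and are each Hölder continuous with exponent ε. -/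

import Mathlib

open MeasureTheory Complex

/-- Wirtinger derivative `∂f = (∂ₓf − i∂_yf)/2` of `f : ℂ → ℂ`. -/
noncomputable def wD (f : ℂ → ℂ) (z : ℂ) : ℂ :=
  (fderiv ℝ f z 1 - Complex.I * fderiv ℝ f z Complex.I) / 2

/-- Wirtinger derivative `∂̄f = (∂ₓf + i∂_yf)/2` of `f : ℂ → ℂ`. -/
noncomputable def wDbar (f : ℂ → ℂ) (z : ℂ) : ℂ :=
  (fderiv ℝ f z 1 + Complex.I * fderiv ℝ f z Complex.I) / 2

/-- `f` is Hölder continuous with exponent `ε`. -/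
def IsHolder (ε : ℝ) (f : ℂ → ℂ) : Prop :=
  ∃ C ≥ (0 : ℝ), ∀ z z' : ℂ, ‖f z - f z'‖ ≤ C * ‖z - z'‖ ^ ε

/-!
Multiplying `m₂₁` by the unimodular phase `exp (i (kz + conj (kz)))` removes `k` from the equations
for `(m₁₁, m₂₁)` and only replaces `q` by another compactly supported Hölder potential; complex
conjugation turns the equations for `(m₁₂, m₂₂)` into those for a first column. For `k = 0`, the
functions `m₁₁ ± conj m₂₁` solve the pseudoanalytic equation `∂̄u = ± q ū` with `u(∞) = 1`.

With the Cauchy transform `C`, the inverse of `∂̄`, the equation `∂̄u = Q ū` reads `u = 1 + C(Q ū)`.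
The operator `u ↦ C(Q ū)` is compact, so by the Fredholm alternative existence follows from
uniqueness. For uniqueness, let `u` vanish at infinity and write `ū = α u + ρ` with `|α| ≤ 1` and
`|ρ| ≤ t`, both smooth in `u`. The integrating factor `exp (-C(Qα))` gives `|u| ≤ const · t` with a
constant independent of `t`, and `t → 0` yields `u = 0`.
-/

open Filter Metric Set Function
open scoped ComplexConjugate Topology ContDiff ENNReal NNReal BoundedContinuousFunction

/-! ### Riesz potentials -/

lemma rpow_neg_mul_rpow_neg_le {x y α β : ℝ} (hx : 0 < x) (hy : 0 < y) (hα : 0 ≤ α)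
    (hβ : 0 ≤ β) : x ^ (-α) * y ^ (-β) ≤ x ^ (-(α + β)) + y ^ (-(α + β)) := by
  rw [neg_add, Real.rpow_add hx, Real.rpow_add hy]
  rcases le_total x y with hxy | hyx
  · have : y ^ (-β) ≤ x ^ (-β) := Real.rpow_le_rpow_of_nonpos hx hxy (by linarith)
    calc x ^ (-α) * y ^ (-β) ≤ x ^ (-α) * x ^ (-β) := by gcongr
      _ ≤ _ := le_add_of_nonneg_right (by positivity)
  · have : x ^ (-α) ≤ y ^ (-α) := Real.rpow_le_rpow_of_nonpos hy hyx (by linarith)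
    calc x ^ (-α) * y ^ (-β) ≤ y ^ (-α) * y ^ (-β) := by gcongr
      _ ≤ _ := le_add_of_nonneg_left (by positivity)

lemma rpow_mul_rpow_neg_mul_inv_le {x y h p δ : ℝ} (hx : 0 < x) (hy : 0 < y) (hh : 0 ≤ h)
    (hxy : h ≤ x + y) (hδ₀ : 0 ≤ δ) (hδ₁ : δ ≤ 1) (hp : 1 ≤ p) :
    h ^ (1 - δ) * x ^ (-p) * y⁻¹ ≤ 2 * (x ^ (-(p + δ)) + y ^ (-(p + δ))) := by
  have h_le : h ^ (1 - δ) ≤ x ^ (1 - δ) + y ^ (1 - δ) :=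
    (Real.rpow_le_rpow hh hxy (by linarith)).trans
      (Real.rpow_add_le_add_rpow hx.le hy.le (by linarith) (by linarith))
  have x_part : x ^ (1 - δ) * x ^ (-p) * y⁻¹ ≤ x ^ (-(p + δ)) + y ^ (-(p + δ)) := by
    rw [← Real.rpow_add hx, ← Real.rpow_neg_one y]
    convert rpow_neg_mul_rpow_neg_le hx hy (α := p - 1 + δ) (β := 1) (by linarith) zero_le_one
      using 2 <;> ring_nf
  have y_part : x ^ (-p) * (y ^ (1 - δ) * y⁻¹) ≤ x ^ (-(p + δ)) + y ^ (-(p + δ)) := by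
    rw [← Real.rpow_neg_one y, ← Real.rpow_add hy]
    convert rpow_neg_mul_rpow_neg_le hx hy (α := p) (β := δ) (by linarith) hδ₀ using 3
    ring
  calc h ^ (1 - δ) * x ^ (-p) * y⁻¹ ≤ (x ^ (1 - δ) + y ^ (1 - δ)) * x ^ (-p) * y⁻¹ := by gcongr
    _ = x ^ (1 - δ) * x ^ (-p) * y⁻¹ + x ^ (-p) * (y ^ (1 - δ) * y⁻¹) := by ring
    _ ≤ _ := by linarith

lemma norm_rpow_neg_le_indicator_ball_add_one {E : Type*} [NormedAddCommGroup E]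
    {γ : ℝ} (hγ : 0 ≤ γ) (ζ : E) :
    ‖ζ‖ ^ (-γ) ≤ (ball (0 : E) 1).indicator (fun ζ ↦ ‖ζ‖ ^ (-γ)) ζ + 1 := by
  by_cases hζ : ζ ∈ ball (0 : E) 1
  · rw [indicator_of_mem hζ]
    exact le_add_of_nonneg_right zero_le_one
  · rw [indicator_of_notMem hζ, zero_add]
    exact Real.rpow_le_one_of_one_le_of_nonpos (by simpa using hζ) (by linarith)

section RieszPotential

variable {E : Type*} [NormedAddCommGroup E] [MeasurableSpace E]

/-- A bound, uniform in `z`, for the Riesz potential `∫ w in K, ‖z - w‖ ^ (-γ) ∂μ` of a set `K` of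
finite measure: the unit ball around `z` contributes at most the first summand, the rest of `K` at
most the second. -/
noncomputable def rieszBound (μ : Measure E) (γ : ℝ) (K : Set E) : ℝ :=
  (∫ ζ in ball 0 1, ‖ζ‖ ^ (-γ) ∂μ) + μ.real K

lemma rieszBound_nonneg (μ : Measure E) (γ : ℝ) (K : Set E) : 0 ≤ rieszBound μ γ K :=
  add_nonneg (integral_nonneg fun _ ↦ by positivity) measureReal_nonneg

variable [NormedSpace ℝ E] [FiniteDimensional ℝ E] [Nontrivial E] [BorelSpace E]
  {μ : Measure E} [μ.IsAddHaarMeasure] {γ : ℝ} {K : Set E}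

lemma integrable_indicator_ball_norm_rpow_neg (hγ : γ < Module.finrank ℝ E) :
    Integrable ((ball (0 : E) 1).indicator fun ζ ↦ ‖ζ‖ ^ (-γ)) μ := by
  rw [integrable_indicator_iff measurableSet_ball]
  refine integrableOn_ball_of_norm_le_rpow (C := 1) Module.finrank_pos hγ ?_
    (by fun_prop : Measurable fun ζ : E ↦ ‖ζ‖ ^ (-γ)).aestronglyMeasurable
  exact Eventually.of_forall fun ζ ↦ by rw [one_mul, Real.norm_of_nonneg (by positivity)]

lemma integrableOn_norm_sub_rpow_neg (hγ₀ : 0 ≤ γ) (hγ : γ < Module.finrank ℝ E) (hK : μ K ≠ ⊤)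
    (z : E) : IntegrableOn (fun w ↦ ‖z - w‖ ^ (-γ)) K μ := by
  refine Integrable.mono'
    (((integrable_indicator_ball_norm_rpow_neg hγ).comp_sub_left z).integrableOn.add
      (integrableOn_const hK (C := (1 : ℝ)))) (by fun_prop : Measurable _).aestronglyMeasurable
    (Eventually.of_forall fun w ↦ ?_)
  rw [Real.norm_of_nonneg (by positivity)]
  exact norm_rpow_neg_le_indicator_ball_add_one hγ₀ (z - w)

lemma setIntegral_norm_sub_rpow_neg_le (hγ₀ : 0 ≤ γ) (hγ : γ < Module.finrank ℝ E) (hK : μ K ≠ ⊤)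
    (z : E) : ∫ w in K, ‖z - w‖ ^ (-γ) ∂μ ≤ rieszBound μ γ K := by
  set g : E → ℝ := (ball 0 1).indicator fun ζ ↦ ‖ζ‖ ^ (-γ) with hg
  have g_int : Integrable (fun w ↦ g (z - w)) μ :=
    (integrable_indicator_ball_norm_rpow_neg hγ).comp_sub_left z
  have one_int : IntegrableOn (fun _ : E ↦ (1 : ℝ)) K μ := integrableOn_const hK
  calc ∫ w in K, ‖z - w‖ ^ (-γ) ∂μ
      ≤ ∫ w in K, (g (z - w) + 1) ∂μ :=
        integral_mono (integrableOn_norm_sub_rpow_neg hγ₀ hγ hK z)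
          (g_int.integrableOn.add one_int)
          fun w ↦ norm_rpow_neg_le_indicator_ball_add_one hγ₀ (z - w)
    _ = (∫ w in K, g (z - w) ∂μ) + μ.real K := by
        rw [integral_add g_int.integrableOn one_int, setIntegral_const, smul_eq_mul, mul_one]
    _ ≤ (∫ w, g (z - w) ∂μ) + μ.real K := by
        refine add_le_add_left (setIntegral_le_integral g_int ?_) _
        exact Eventually.of_forall fun _ ↦ indicator_nonneg (fun _ _ ↦ by positivity) _
    _ = rieszBound μ γ K := by
        rw [integral_sub_left_eq_self g μ z, hg, integral_indicator measurableSet_ball, rieszBound]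

variable {F : Type*} [NormedAddCommGroup F] {f : E → F} {a b : E} {A : ℝ}

lemma ae_norm_le_of_norm_le_two_poles
    (hfb : ∀ w, w ≠ a → w ≠ b → ‖f w‖ ≤ A * (‖a - w‖ ^ (-γ) + ‖b - w‖ ^ (-γ))) :
    ∀ᵐ w ∂μ.restrict K, ‖f w‖ ≤ A * (‖a - w‖ ^ (-γ) + ‖b - w‖ ^ (-γ)) := by
  refine ae_restrict_of_ae ?_
  filter_upwards [Measure.ae_ne μ a, Measure.ae_ne μ b] with w using hfb w

lemma integrable_of_norm_le_two_poles (hγ₀ : 0 ≤ γ) (hγ : γ < Module.finrank ℝ E) (hK : μ K ≠ ⊤)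
    (hf : AEStronglyMeasurable f μ) (hfK : ∀ w ∉ K, f w = 0)
    (hfb : ∀ w, w ≠ a → w ≠ b → ‖f w‖ ≤ A * (‖a - w‖ ^ (-γ) + ‖b - w‖ ^ (-γ))) :
    Integrable f μ := by
  have pole_int := integrableOn_norm_sub_rpow_neg (μ := μ) hγ₀ hγ hK
  exact (integrableOn_iff_integrable_of_support_subset
    fun w hw ↦ not_imp_comm.1 (hfK w) hw).1 <| (((pole_int a).add (pole_int b)).const_mul A).mono'
      hf.restrict (ae_norm_le_of_norm_le_two_poles hfb)

lemma norm_integral_le_of_norm_le_two_poles [NormedSpace ℝ F] (hγ₀ : 0 ≤ γ)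
    (hγ : γ < Module.finrank ℝ E) (hK : μ K ≠ ⊤) (hA : 0 ≤ A) (hfK : ∀ w ∉ K, f w = 0)
    (hfb : ∀ w, w ≠ a → w ≠ b → ‖f w‖ ≤ A * (‖a - w‖ ^ (-γ) + ‖b - w‖ ^ (-γ))) :
    ‖∫ w, f w ∂μ‖ ≤ A * (2 * rieszBound μ γ K) := by
  have pole_int := integrableOn_norm_sub_rpow_neg (μ := μ) hγ₀ hγ hK
  have pole_le := setIntegral_norm_sub_rpow_neg_le (μ := μ) hγ₀ hγ hK
  rw [← setIntegral_eq_integral_of_forall_compl_eq_zero hfK]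
  calc ‖∫ w in K, f w ∂μ‖
      ≤ ∫ w in K, A * (‖a - w‖ ^ (-γ) + ‖b - w‖ ^ (-γ)) ∂μ :=
        norm_integral_le_of_norm_le (((pole_int a).add (pole_int b)).const_mul A)
          (ae_norm_le_of_norm_le_two_poles hfb)
    _ = A * ((∫ w in K, ‖a - w‖ ^ (-γ) ∂μ) + ∫ w in K, ‖b - w‖ ^ (-γ) ∂μ) := by
        rw [integral_const_mul, integral_add (pole_int a) (pole_int b)]
    _ ≤ A * (2 * rieszBound μ γ K) := by
        rw [two_mul]
        gcongr
        exacts [pole_le a, pole_le b]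

end RieszPotential

/-! ### The Cauchy transform -/

lemma memLp_one_add_norm_inv {E : Type*} [NormedAddCommGroup E] [NormedSpace ℝ E]
    [FiniteDimensional ℝ E] [MeasurableSpace E] [BorelSpace E] {μ : Measure E}
    [μ.IsAddHaarMeasure] {p : ℝ≥0∞} (hp : Module.finrank ℝ E < p) (hp_top : p ≠ ⊤) :
    MemLp (fun z : E ↦ (1 + ‖z‖)⁻¹) p μ := by
  have finrank_lt : (Module.finrank ℝ E : ℝ) < p.toReal := by
    simpa using (ENNReal.toReal_lt_toReal (by simp) hp_top).2 hp
  rw [← integrable_norm_rpow_iff (by fun_prop : Measurable _).aestronglyMeasurable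
    (pos_of_gt hp).ne' hp_top]
  convert integrable_one_add_norm (μ := μ) finrank_lt using 2 with z
  rw [Real.norm_of_nonneg (by positivity), Real.inv_rpow (by positivity),
    Real.rpow_neg (by positivity)]

/-- The Cauchy transform `z ↦ π⁻¹ ∫ f(w) / (z - w) dw`, the inverse of `∂̄` among functions
vanishing at infinity. The integrand takes the value `0` at its pole `w = z`. -/
noncomputable def cauchyTransform (f : ℂ → ℂ) (z : ℂ) : ℂ :=
  (Real.pi : ℂ)⁻¹ * ∫ w, f w * (z - w)⁻¹

lemma norm_cauchyTransform (f : ℂ → ℂ) (z : ℂ) :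
    ‖cauchyTransform f z‖ = Real.pi⁻¹ * ‖∫ w, f w * (z - w)⁻¹‖ := by
  rw [cauchyTransform, norm_mul, norm_inv, norm_real, Real.norm_of_nonneg Real.pi_pos.le]

lemma cauchyTransform_add {f g : ℂ → ℂ} {z : ℂ} (hf : Integrable fun w ↦ f w * (z - w)⁻¹)
    (hg : Integrable fun w ↦ g w * (z - w)⁻¹) :
    cauchyTransform (fun w ↦ f w + g w) z = cauchyTransform f z + cauchyTransform g z := by
  simp only [cauchyTransform, add_mul]
  rw [integral_add hf hg, mul_add]

lemma cauchyTransform_const_mul (c : ℂ) (f : ℂ → ℂ) (z : ℂ) :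
    cauchyTransform (fun w ↦ c * f w) z = c * cauchyTransform f z := by
  simp only [cauchyTransform, mul_assoc]
  rw [integral_const_mul, mul_left_comm]

lemma cauchyTransform_comp_sub_right (f : ℂ → ℂ) (a z : ℂ) :
    cauchyTransform (fun w ↦ f (w - a)) z = cauchyTransform f (z - a) := by
  rw [cauchyTransform, cauchyTransform,
    ← integral_sub_right_eq_self (fun w ↦ f w * (z - a - w)⁻¹) a]
  simp only [sub_sub_sub_cancel_right]

lemma cauchyTransform_sub_mul {f : ℂ → ℂ} {z : ℂ} (hf : Integrable f)
    (hfz : Integrable fun w ↦ f w * (z - w)⁻¹) (a : ℂ) :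
    cauchyTransform (fun w ↦ (w - a) * f w) z =
      (z - a) * cauchyTransform f z - (Real.pi : ℂ)⁻¹ * ∫ w, f w := by
  have kernel_eq : (fun w ↦ (w - a) * f w * (z - w)⁻¹) =ᵐ[volume]
      fun w ↦ (z - a) * (f w * (z - w)⁻¹) - f w := by
    filter_upwards [Measure.ae_ne volume z] with w hw
    have : z - w ≠ 0 := sub_ne_zero.2 hw.symm
    field_simp
    ring
  simp only [cauchyTransform]
  rw [integral_congr_ae kernel_eq, integral_sub (hfz.const_mul _) hf, integral_const_mul]
  ring

/-- A measurable function vanishing off `K` whose modulus is at most `A‖a - w‖ ^ (-β)`. The bound is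
imposed at `w = a` as well, where `0 ^ (-β)` is `1` for `β = 0` and `0` otherwise. -/
structure IsPolarSource (K : Set ℂ) (a : ℂ) (β A : ℝ) (f : ℂ → ℂ) : Prop where
  aestronglyMeasurable : AEStronglyMeasurable f
  norm_le : ∀ w, ‖f w‖ ≤ A * ‖a - w‖ ^ (-β)
  eq_zero_of_notMem : ∀ w ∉ K, f w = 0

/-- A measurable function vanishing off `K` and bounded by `B`. -/
structure IsBoundedSource (K : Set ℂ) (B : ℝ) (f : ℂ → ℂ) : Prop where
  aestronglyMeasurable : AEStronglyMeasurable f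
  norm_le : ∀ w, ‖f w‖ ≤ B
  eq_zero_of_notMem : ∀ w ∉ K, f w = 0

namespace IsPolarSource

variable {K : Set ℂ} {a : ℂ} {β A : ℝ} {f : ℂ → ℂ}

lemma nonneg (hf : IsPolarSource K a β A f) : 0 ≤ A := by
  simpa using (norm_nonneg _).trans (hf.norm_le (a + 1))

lemma integrable (hf : IsPolarSource K a β A f) (hK : volume K ≠ ⊤) (hβ₀ : 0 ≤ β) (hβ : β < 2) :
    Integrable f := by
  refine integrable_of_norm_le_two_poles (a := a) (b := a) (A := A) hβ₀ (by simpa using hβ) hK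
    hf.aestronglyMeasurable hf.eq_zero_of_notMem fun w _ _ ↦ (hf.norm_le w).trans ?_
  have := hf.nonneg
  gcongr
  exact le_add_of_nonneg_left (by positivity)

lemma norm_mul_inv_le (hf : IsPolarSource K a β A f) (hβ₀ : 0 ≤ β) {z w : ℂ} (ha : w ≠ a)
    (hz : w ≠ z) :
    ‖f w * (z - w)⁻¹‖ ≤ A * (‖a - w‖ ^ (-(1 + β)) + ‖z - w‖ ^ (-(1 + β))) := by
  have := hf.nonneg
  rw [norm_mul, norm_inv, add_comm 1 β]
  calc ‖f w‖ * ‖z - w‖⁻¹ ≤ A * ‖a - w‖ ^ (-β) * ‖z - w‖⁻¹ := by gcongr; exact hf.norm_le w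
    _ = A * (‖a - w‖ ^ (-β) * ‖z - w‖ ^ (-1 : ℝ)) := by rw [Real.rpow_neg_one, mul_assoc]
    _ ≤ _ := by
      gcongr
      exact rpow_neg_mul_rpow_neg_le (norm_pos_iff.2 (sub_ne_zero.2 ha.symm))
        (norm_pos_iff.2 (sub_ne_zero.2 hz.symm)) hβ₀ zero_le_one

lemma integrable_mul_inv (hf : IsPolarSource K a β A f) (hK : volume K ≠ ⊤) (hβ₀ : 0 ≤ β)
    (hβ : β < 1) (z : ℂ) : Integrable fun w ↦ f w * (z - w)⁻¹ :=
  integrable_of_norm_le_two_poles (by linarith) (by simp; linarith) hK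
    (hf.aestronglyMeasurable.mul (by fun_prop : Measurable _).aestronglyMeasurable)
    (fun w hw ↦ by rw [hf.eq_zero_of_notMem w hw, zero_mul])
    (fun _ ha hz ↦ hf.norm_mul_inv_le hβ₀ ha hz)

lemma norm_cauchyTransform_le (hf : IsPolarSource K a β A f) (hK : volume K ≠ ⊤) (hβ₀ : 0 ≤ β)
    (hβ : β < 1) (z : ℂ) :
    ‖cauchyTransform f z‖ ≤ Real.pi⁻¹ * (A * (2 * rieszBound volume (1 + β) K)) := by
  rw [norm_cauchyTransform]
  gcongr
  exact norm_integral_le_of_norm_le_two_poles (by linarith) (by simp; linarith) hK hf.nonneg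
    (fun w hw ↦ by rw [hf.eq_zero_of_notMem w hw, zero_mul])
    (fun _ ha hz ↦ hf.norm_mul_inv_le hβ₀ ha hz)

lemma norm_mul_inv_sub_mul_inv_le (hf : IsPolarSource K a β A f) (hβ₀ : 0 ≤ β) {δ : ℝ}
    (hδ₀ : 0 < δ) (hδ₁ : δ ≤ 1) {z w : ℂ} (ha : w ≠ a) (hz : w ≠ z) :
    ‖f w * (z - w)⁻¹ - f w * (a - w)⁻¹‖ ≤
      2 * A * ‖z - a‖ ^ δ * (‖a - w‖ ^ (-(1 + β + δ)) + ‖z - w‖ ^ (-(1 + β + δ))) := by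
  have hA := hf.nonneg
  have ha' : a - w ≠ 0 := sub_ne_zero.2 ha.symm
  have hz' : z - w ≠ 0 := sub_ne_zero.2 hz.symm
  have x_pos : 0 < ‖a - w‖ := norm_pos_iff.2 ha'
  have split_norm : ‖z - a‖ = ‖z - a‖ ^ δ * ‖z - a‖ ^ (1 - δ) := by
    rw [← Real.rpow_add_of_nonneg (norm_nonneg _) hδ₀.le (by linarith), add_sub_cancel,
      Real.rpow_one]
  have triangle : ‖z - a‖ ≤ ‖a - w‖ + ‖z - w‖ := by
    simpa [add_comm, dist_eq_norm] using dist_triangle_right z a w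
  calc ‖f w * (z - w)⁻¹ - f w * (a - w)⁻¹‖
      = ‖f w‖ * (‖z - a‖ * ‖a - w‖⁻¹ * ‖z - w‖⁻¹) := by
        rw [show f w * (z - w)⁻¹ - f w * (a - w)⁻¹ = f w * ((a - z) * (a - w)⁻¹ * (z - w)⁻¹) by
          field_simp; ring]
        simp only [norm_mul, norm_inv, norm_sub_rev a z]
    _ ≤ A * ‖a - w‖ ^ (-β) * (‖z - a‖ * ‖a - w‖⁻¹ * ‖z - w‖⁻¹) := by
        gcongr
        exact hf.norm_le w
    _ = A * ‖z - a‖ ^ δ * (‖z - a‖ ^ (1 - δ) * ‖a - w‖ ^ (-(1 + β)) * ‖z - w‖⁻¹) := by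
        rw [neg_add, Real.rpow_add x_pos, Real.rpow_neg_one]
        conv_lhs => rw [split_norm]
        ring
    _ ≤ A * ‖z - a‖ ^ δ * (2 * (‖a - w‖ ^ (-(1 + β + δ)) + ‖z - w‖ ^ (-(1 + β + δ)))) := by
        refine mul_le_mul_of_nonneg_left ?_ (by positivity)
        exact rpow_mul_rpow_neg_mul_inv_le x_pos (norm_pos_iff.2 hz') (norm_nonneg _) triangle
          hδ₀.le hδ₁ (le_add_of_nonneg_right hβ₀)
    _ = _ := by ring

lemma norm_cauchyTransform_sub_le (hf : IsPolarSource K a β A f) (hK : volume K ≠ ⊤)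
    (hβ₀ : 0 ≤ β) {δ : ℝ} (hδ₀ : 0 < δ) (hβδ : β + δ < 1) (z : ℂ) :
    ‖cauchyTransform f z - cauchyTransform f a‖ ≤
      4 * Real.pi⁻¹ * rieszBound volume (1 + β + δ) K * A * ‖z - a‖ ^ δ := by
  have hA := hf.nonneg
  have kernel_int := hf.integrable_mul_inv hK hβ₀ (by linarith)
  calc ‖cauchyTransform f z - cauchyTransform f a‖
      = Real.pi⁻¹ * ‖∫ w, (f w * (z - w)⁻¹ - f w * (a - w)⁻¹)‖ := by
        rw [cauchyTransform, cauchyTransform, ← mul_sub,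
          ← integral_sub (kernel_int z) (kernel_int a), norm_mul, norm_inv, norm_real,
          Real.norm_of_nonneg Real.pi_pos.le]
    _ ≤ Real.pi⁻¹ * (2 * A * ‖z - a‖ ^ δ * (2 * rieszBound volume (1 + β + δ) K)) := by
        gcongr
        refine norm_integral_le_of_norm_le_two_poles (by linarith) (by simp; linarith) hK
          (by positivity) (fun w hw ↦ ?_)
          fun w ha hz ↦ hf.norm_mul_inv_sub_mul_inv_le hβ₀ hδ₀ (by linarith) ha hz
        simp only [hf.eq_zero_of_notMem w hw, zero_mul, sub_zero]
    _ = _ := by ring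

lemma continuousAt_cauchyTransform (hf : IsPolarSource K a β A f) (hK : volume K ≠ ⊤)
    (hβ₀ : 0 ≤ β) (hβ : β < 1) : ContinuousAt (cauchyTransform f) a := by
  have hδ : 0 < (1 - β) / 2 := by linarith
  have modulus_tendsto : Tendsto (fun z ↦ 4 * Real.pi⁻¹ *
      rieszBound volume (1 + β + (1 - β) / 2) K * A * ‖z - a‖ ^ ((1 - β) / 2)) (𝓝 a) (𝓝 0) := by
    have : Continuous fun z ↦ 4 * Real.pi⁻¹ * rieszBound volume (1 + β + (1 - β) / 2) K * A *
        ‖z - a‖ ^ ((1 - β) / 2) := by fun_prop (disch := exact hδ.le)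
    simpa [Real.zero_rpow hδ.ne'] using this.tendsto a
  exact tendsto_iff_norm_sub_tendsto_zero.2 <| squeeze_zero (fun _ ↦ norm_nonneg _)
    (hf.norm_cauchyTransform_sub_le hK hβ₀ hδ (by linarith)) modulus_tendsto

end IsPolarSource

/-- The norm of the Cauchy transform as an operator from bounded sources on `K` to bounded
functions is at most this constant. -/
noncomputable def cauchyBound (K : Set ℂ) : ℝ := Real.pi⁻¹ * (2 * rieszBound volume 1 K)

lemma cauchyBound_nonneg (K : Set ℂ) : 0 ≤ cauchyBound K := by
  have := rieszBound_nonneg volume 1 K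
  unfold cauchyBound
  positivity

namespace IsBoundedSource

variable {K : Set ℂ} {B : ℝ} {f : ℂ → ℂ}

lemma nonneg (hf : IsBoundedSource K B f) : 0 ≤ B := (norm_nonneg _).trans (hf.norm_le 0)

lemma isPolarSource (hf : IsBoundedSource K B f) (a : ℂ) : IsPolarSource K a 0 B f :=
  ⟨hf.aestronglyMeasurable, by simpa using hf.norm_le, hf.eq_zero_of_notMem⟩

lemma integrable (hf : IsBoundedSource K B f) (hK : volume K ≠ ⊤) : Integrable f :=
  (hf.isPolarSource 0).integrable hK le_rfl zero_lt_two

lemma integrable_mul_inv (hf : IsBoundedSource K B f) (hK : volume K ≠ ⊤) (z : ℂ) :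
    Integrable fun w ↦ f w * (z - w)⁻¹ :=
  (hf.isPolarSource 0).integrable_mul_inv hK le_rfl zero_lt_one z

lemma norm_cauchyTransform_le (hf : IsBoundedSource K B f) (hK : volume K ≠ ⊤) (z : ℂ) :
    ‖cauchyTransform f z‖ ≤ cauchyBound K * B := by
  convert (hf.isPolarSource 0).norm_cauchyTransform_le hK le_rfl zero_lt_one z using 1
  rw [cauchyBound, add_zero]
  ring

lemma norm_cauchyTransform_sub_le (hf : IsBoundedSource K B f) (hK : volume K ≠ ⊤) {δ : ℝ}
    (hδ₀ : 0 < δ) (hδ₁ : δ < 1) (z z' : ℂ) :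
    ‖cauchyTransform f z - cauchyTransform f z'‖ ≤
      4 * Real.pi⁻¹ * rieszBound volume (1 + δ) K * B * ‖z - z'‖ ^ δ := by
  simpa only [add_zero] using
    (hf.isPolarSource z').norm_cauchyTransform_sub_le hK le_rfl hδ₀ (by linarith) z

lemma continuous_cauchyTransform (hf : IsBoundedSource K B f) (hK : volume K ≠ ⊤) :
    Continuous (cauchyTransform f) := continuous_iff_continuousAt.2 fun z ↦
  (hf.isPolarSource z).continuousAt_cauchyTransform hK le_rfl zero_lt_one

lemma isHolder_cauchyTransform (hf : IsBoundedSource K B f) (hK : volume K ≠ ⊤) {δ : ℝ}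
    (hδ₀ : 0 < δ) (hδ₁ : δ < 1) : IsHolder δ (cauchyTransform f) := by
  have := rieszBound_nonneg volume (1 + δ) K
  have := hf.nonneg
  exact ⟨4 * Real.pi⁻¹ * rieszBound volume (1 + δ) K * B, by positivity,
    hf.norm_cauchyTransform_sub_le hK hδ₀ hδ₁⟩

lemma id_mul (hf : IsBoundedSource K B f) {R : ℝ} (hKR : ∀ w ∈ K, ‖w‖ ≤ R) (hR : 0 ≤ R) :
    IsBoundedSource K (R * B) fun w ↦ w * f w where
  aestronglyMeasurable := aestronglyMeasurable_id.mul hf.aestronglyMeasurable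
  norm_le w := by
    have := hf.nonneg
    by_cases hw : w ∈ K
    · rw [norm_mul]
      gcongr
      exacts [hKR w hw, hf.norm_le w]
    · rw [hf.eq_zero_of_notMem w hw, mul_zero, norm_zero]
      positivity
  eq_zero_of_notMem w hw := by rw [hf.eq_zero_of_notMem w hw, mul_zero]

lemma exists_norm_cauchyTransform_le_one_add_norm_inv (hf : IsBoundedSource K B f)
    (hK : Bornology.IsBounded K) :
    ∃ M, ∀ z, ‖cauchyTransform f z‖ ≤ M * (1 + ‖z‖)⁻¹ := by
  have hKv : volume K ≠ ⊤ := hK.measure_lt_top.ne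
  obtain ⟨R, R_pos, hKR⟩ := hK.exists_pos_norm_le
  have hg := hf.id_mul hKR R_pos.le
  have mul_transform (z : ℂ) : z * cauchyTransform f z =
      cauchyTransform (fun w ↦ w * f w) z + (Real.pi : ℂ)⁻¹ * ∫ w, f w := by
    have := cauchyTransform_sub_mul (hf.integrable hKv) (hf.integrable_mul_inv hKv z) 0
    simp only [sub_zero] at this
    rw [this, sub_add_cancel]
  refine ⟨cauchyBound K * B + (cauchyBound K * (R * B) + ‖(Real.pi : ℂ)⁻¹ * ∫ w, f w‖),
    fun z ↦ (le_mul_inv_iff₀ (by positivity)).2 ?_⟩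
  calc ‖cauchyTransform f z‖ * (1 + ‖z‖) = ‖cauchyTransform f z‖ + ‖z * cauchyTransform f z‖ := by
        rw [norm_mul]
        ring
    _ ≤ _ := by
        rw [mul_transform]
        exact add_le_add (hf.norm_cauchyTransform_le hKv z) <| (norm_add_le _ _).trans <|
          add_le_add_left (hg.norm_cauchyTransform_le hKv z) _

lemma tendsto_cauchyTransform (hf : IsBoundedSource K B f) (hK : Bornology.IsBounded K) :
    Tendsto (cauchyTransform f) (cocompact ℂ) (𝓝 0) := by
  obtain ⟨M, hM⟩ := hf.exists_norm_cauchyTransform_le_one_add_norm_inv hK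
  refine squeeze_zero_norm hM ?_
  simpa using ((tendsto_inv_atTop_zero.comp
    (tendsto_atTop_add_const_left _ 1 tendsto_norm_cocompact_atTop)).const_mul M)

lemma memLp_cauchyTransform (hf : IsBoundedSource K B f) (hK : Bornology.IsBounded K)
    {p : ℝ≥0∞} (hp : 2 < p) (hp_top : p ≠ ⊤) : MemLp (cauchyTransform f) p := by
  obtain ⟨M, hM⟩ := hf.exists_norm_cauchyTransform_le_one_add_norm_inv hK
  refine (memLp_one_add_norm_inv (by simpa using hp) hp_top).of_le_mul (c := M)
    (hf.continuous_cauchyTransform hK.measure_lt_top.ne).aestronglyMeasurable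
    (ae_of_all _ fun z ↦ ?_)
  rw [Real.norm_of_nonneg (by positivity)]
  exact hM z

end IsBoundedSource

/-! ### The Cauchy transform of a disc -/

section Polar

variable {F : Type*} [NormedAddCommGroup F] [NormedSpace ℝ F] {f : ℂ → F}

lemma integrableOn_smul_comp_polarCoord_symm (hf : Integrable f) :
    IntegrableOn (fun p ↦ p.1 • f (Complex.polarCoord.symm p)) polarCoord.target := by
  have hf_prod : Integrable fun p ↦ f (measurableEquivRealProd.symm p) :=
    (volume_preserving_equiv_real_prod.symm.integrable_comp_emb
      measurableEquivRealProd.symm.measurableEmbedding).2 hf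
  refine IntegrableOn.congr_fun ((integrableOn_image_iff_integrableOn_abs_det_fderiv_smul volume
    polarCoord.open_target.measurableSet
    (fun p _ ↦ (hasFDerivAt_polarCoord_symm p).hasFDerivWithinAt) polarCoord.symm.injOn _).1
    hf_prod.integrableOn) (fun p hp ↦ ?_) polarCoord.open_target.measurableSet
  simp only [det_fderivPolarCoordSymm, abs_of_pos (mem_Ioi.1 hp.1),
    measurableEquivRealProd_symm_polarCoord_symm_apply]

lemma integral_eq_integral_circleAverage (hf : Integrable f) :
    ∫ w, f w = ∫ ρ in Ioi (0 : ℝ), (2 * Real.pi * ρ) • Real.circleAverage f 0 ρ := by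
  have polar_int := integrableOn_smul_comp_polarCoord_symm hf
  rw [polarCoord_target, Measure.volume_eq_prod] at polar_int
  rw [← Complex.integral_comp_polarCoord_symm, polarCoord_target, Measure.volume_eq_prod,
    setIntegral_prod _ polar_int]
  refine setIntegral_congr_fun measurableSet_Ioi fun ρ _ ↦ ?_
  have polar_eq (θ : ℝ) : Complex.polarCoord.symm (ρ, θ) = circleMap 0 ρ θ := by
    simp [circleMap, Complex.exp_mul_I]
  have shift : ∫ θ in -Real.pi..Real.pi, f (circleMap 0 ρ θ) =
      ∫ θ in (0 : ℝ)..2 * Real.pi, f (circleMap 0 ρ θ) := by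
    simpa [two_mul] using
      ((periodic_circleMap 0 ρ).comp f).intervalIntegral_add_eq (-Real.pi) 0
  simp only [polar_eq]
  rw [integral_smul, ← integral_Ioc_eq_integral_Ioo,
    ← intervalIntegral.integral_of_le (by linarith [Real.pi_pos]), shift, Real.circleAverage,
    smul_smul]
  congr 1
  field_simp

end Polar

lemma circleAverage_sub_inv_of_lt {z : ℂ} {ρ : ℝ} (hρ₀ : 0 < ρ) (hρ : ρ < ‖z‖) :
    Real.circleAverage (fun w ↦ (z - w)⁻¹) 0 ρ = z⁻¹ := by
  have holo : DiffContOnCl ℂ (fun w ↦ (z - w)⁻¹) (ball 0 |ρ|) := by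
    refine ((differentiable_const z).sub differentiable_id).diffContOnCl.inv fun w hw ↦ ?_
    have : ‖w‖ ≤ ρ := by simpa [abs_of_pos hρ₀] using closure_ball_subset_closedBall hw
    exact sub_ne_zero.2 fun h ↦ (hρ.trans_eq (congrArg norm h)).not_ge this
  simpa using holo.circleAverage

lemma circleAverage_sub_inv_of_gt {z : ℂ} {ρ : ℝ} (hρ : ‖z‖ < ρ) :
    Real.circleAverage (fun w ↦ (z - w)⁻¹) 0 ρ = 0 := by
  -- Reflecting `w ↦ ρ² / w` makes the integrand holomorphic in the disc and `0` at its centre.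
  have reflect : Real.circleAverage (fun w ↦ (z - w)⁻¹) 0 ρ =
      Real.circleAverage (fun w ↦ w * (z * w - ρ)⁻¹) 0 1 := by
    rw [Real.circleAverage_eq_circleAverage_zero_one, ← Real.circleAverage_zero_one_congr_inv]
    refine Real.circleAverage_congr_sphere fun w hw ↦ ?_
    have hw₀ : w ≠ 0 := by rintro rfl; simp at hw
    simp only [add_zero]
    rw [show z - ρ * w⁻¹ = (z * w - ρ) * w⁻¹ by field_simp, mul_inv, inv_inv, mul_comm]
  have holo : DiffContOnCl ℂ (fun w ↦ w * (z * w - ρ)⁻¹) (ball 0 |1|) := by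
    refine differentiable_id.diffContOnCl.smul (DiffContOnCl.inv
      (((differentiable_const z).mul differentiable_id).sub_const _).diffContOnCl fun w hw ↦ ?_)
    have hw₁ : ‖w‖ ≤ 1 := by simpa using closure_ball_subset_closedBall hw
    have : ‖z * w‖ < ‖(ρ : ℂ)‖ := by
      rw [norm_mul, norm_real]
      exact (mul_le_of_le_one_right (norm_nonneg _) hw₁).trans_lt (hρ.trans_le (le_abs_self _))
    exact sub_ne_zero.2 fun h ↦ this.ne (congrArg _ h)
  rw [reflect, holo.circleAverage, zero_mul]

lemma isBoundedSource_indicator_ball (a : ℂ) (R : ℝ) :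
    IsBoundedSource (ball a R) 1 ((ball a R).indicator 1) where
  aestronglyMeasurable := (measurable_one.indicator measurableSet_ball).aestronglyMeasurable
  norm_le w := (norm_indicator_le_norm_self _ w).trans (by simp)
  eq_zero_of_notMem _ hw := indicator_of_notMem hw _

lemma circleAverage_indicator_ball_mul_sub_inv {z : ℂ} {ρ R : ℝ} (hz : ‖z‖ < R) (hρ₀ : 0 < ρ)
    (hρ : ρ ≠ ‖z‖) : Real.circleAverage (fun w ↦ (ball 0 R).indicator 1 w * (z - w)⁻¹) 0 ρ =
      (Ioo 0 ‖z‖).indicator (fun _ ↦ z⁻¹) ρ := by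
  have on_circle : Real.circleAverage (fun w ↦ (ball 0 R).indicator 1 w * (z - w)⁻¹) 0 ρ =
      Real.circleAverage (fun w ↦ (Iio R).indicator 1 ρ * (z - w)⁻¹) 0 ρ := by
    refine Real.circleAverage_congr_sphere fun w hw ↦ ?_
    have : ‖w‖ = ρ := by simpa [abs_of_pos hρ₀] using hw
    by_cases h : ρ < R <;> simp [this, h]
  rw [on_circle]
  rcases hρ.lt_or_gt with hlt | hgt
  · rw [indicator_of_mem (mem_Iio.2 (hlt.trans hz)), indicator_of_mem (mem_Ioo.2 ⟨hρ₀, hlt⟩)]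
    simpa using circleAverage_sub_inv_of_lt hρ₀ hlt
  · rw [indicator_of_notMem (s := Ioo 0 ‖z‖) fun h ↦ hgt.not_gt h.2]
    have := Real.circleAverage_fun_smul (f := fun w ↦ (z - w)⁻¹) (c := 0) (R := ρ)
      (a := (Iio R).indicator (1 : ℝ → ℂ) ρ)
    simpa [circleAverage_sub_inv_of_gt hgt] using this

lemma cauchyTransform_indicator_ball_zero {z : ℂ} {R : ℝ} (hz : ‖z‖ < R) :
    cauchyTransform ((ball 0 R).indicator 1) z = conj z := by
  have kernel_int := (isBoundedSource_indicator_ball 0 R).integrable_mul_inv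
    measure_ball_lt_top.ne z
  have annuli : ∀ᵐ ρ : ℝ, ρ ∈ Ioi 0 → (2 * Real.pi * ρ) •
      Real.circleAverage (fun w ↦ (ball 0 R).indicator 1 w * (z - w)⁻¹) 0 ρ =
        (Ioo 0 ‖z‖).indicator (fun ρ ↦ ((2 * Real.pi * ρ : ℝ) : ℂ) * z⁻¹) ρ := by
    filter_upwards [Measure.ae_ne volume ‖z‖] with ρ hρ hρ₀
    rw [circleAverage_indicator_ball_mul_sub_inv hz hρ₀ hρ]
    by_cases h : ρ ∈ Ioo 0 ‖z‖ <;> simp [h]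
  rw [cauchyTransform, integral_eq_integral_circleAverage kernel_int,
    setIntegral_congr_ae measurableSet_Ioi annuli, setIntegral_indicator measurableSet_Ioo,
    inter_eq_right.2 Ioo_subset_Ioi_self, ← integral_Ioc_eq_integral_Ioo,
    ← intervalIntegral.integral_of_le (norm_nonneg z), intervalIntegral.integral_mul_const,
    intervalIntegral.integral_ofReal, intervalIntegral.integral_const_mul, integral_id]
  rcases eq_or_ne z 0 with rfl | hz₀
  · simp
  · have norm_sq : (‖z‖ : ℂ) ^ 2 = z * conj z := (mul_conj' z).symm
    push_cast
    field_simp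
    rw [← norm_sq]
    ring

lemma cauchyTransform_indicator_ball {a z : ℂ} {R : ℝ} (hz : z ∈ ball a R) :
    cauchyTransform ((ball a R).indicator 1) z = conj (z - a) := by
  have translate : (ball a R).indicator (1 : ℂ → ℂ) =
      fun w ↦ (ball 0 R).indicator (1 : ℂ → ℂ) (w - a) := by
    ext w
    simp [indicator, dist_eq_norm]
  rw [translate, cauchyTransform_comp_sub_right,
    cauchyTransform_indicator_ball_zero (by simpa [dist_eq_norm] using hz)]

/-! ### The Cauchy transform inverts `∂̄` -/

section Wirtinger

variable {f g : ℂ → ℂ} {z : ℂ}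

lemma wDbar_const (c z : ℂ) : wDbar (fun _ ↦ c) z = 0 := by simp [wDbar]

lemma wDbar_add (hf : DifferentiableAt ℝ f z) (hg : DifferentiableAt ℝ g z) :
    wDbar (fun w ↦ f w + g w) z = wDbar f z + wDbar g z := by
  simp only [wDbar, fderiv_fun_add hf hg, add_apply]
  ring

lemma wDbar_sub (hf : DifferentiableAt ℝ f z) (hg : DifferentiableAt ℝ g z) :
    wDbar (fun w ↦ f w - g w) z = wDbar f z - wDbar g z := by
  simp only [wDbar, fderiv_fun_sub hf hg, sub_apply]
  ring

lemma wDbar_mul (hf : DifferentiableAt ℝ f z) (hg : DifferentiableAt ℝ g z) :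
    wDbar (fun w ↦ f w * g w) z = wDbar f z * g z + f z * wDbar g z := by
  simp only [wDbar, fderiv_fun_mul hf hg, add_apply, smul_apply, smul_eq_mul]
  ring

lemma wD_mul (hf : DifferentiableAt ℝ f z) (hg : DifferentiableAt ℝ g z) :
    wD (fun w ↦ f w * g w) z = wD f z * g z + f z * wD g z := by
  simp only [wD, fderiv_fun_mul hf hg, add_apply, smul_apply, smul_eq_mul]
  ring

lemma wDbar_const_mul (c : ℂ) (hf : DifferentiableAt ℝ f z) :
    wDbar (fun w ↦ c * f w) z = c * wDbar f z := by
  rw [wDbar_mul (differentiableAt_const c) hf, wDbar_const, zero_mul, zero_add]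

lemma wDbar_cexp (hf : DifferentiableAt ℝ f z) :
    wDbar (fun w ↦ cexp (f w)) z = cexp (f z) * wDbar f z := by
  simp only [wDbar, hf.hasFDerivAt.cexp.fderiv, smul_apply, smul_eq_mul]
  ring

lemma fderiv_conj_comp (hf : DifferentiableAt ℝ f z) (v : ℂ) :
    fderiv ℝ (fun w ↦ conj (f w)) z v = conj (fderiv ℝ f z v) := by
  have : HasFDerivAt (fun w ↦ conj (f w)) ((conjCLE : ℂ →L[ℝ] ℂ) ∘L fderiv ℝ f z) z :=
    (conjCLE : ℂ →L[ℝ] ℂ).hasFDerivAt.comp z hf.hasFDerivAt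
  rw [this.fderiv, ContinuousLinearMap.comp_apply]
  rfl

lemma wDbar_conj (hf : DifferentiableAt ℝ f z) :
    wDbar (fun w ↦ conj (f w)) z = conj (wD f z) := by
  simp only [wDbar, wD, fderiv_conj_comp hf, map_div₀, map_sub, map_mul, conj_I, conj_ofNat]
  ring

lemma wD_conj (hf : DifferentiableAt ℝ f z) : wD (fun w ↦ conj (f w)) z = conj (wDbar f z) := by
  simp only [wDbar, wD, fderiv_conj_comp hf, map_div₀, map_add, map_mul, conj_I, conj_ofNat]
  ring

lemma wDbar_of_hasFDerivAt_smul_id_add_smul_conj {c d : ℂ}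
    (hf : HasFDerivAt f (c • ContinuousLinearMap.id ℝ ℂ + d • (conjCLE : ℂ →L[ℝ] ℂ)) z) :
    wDbar f z = d := by
  rw [wDbar, hf.fderiv]
  simp only [add_apply, smul_apply, ContinuousLinearMap.id_apply, ContinuousLinearEquiv.coe_coe,
    conjCLE_apply, map_one, conj_I, smul_eq_mul]
  linear_combination (c - d) / 2 * I_mul_I

lemma differentiable_complex_of_wDbar_eq_zero (hf : Differentiable ℝ f) (h : ∀ z, wDbar f z = 0) :
    Differentiable ℂ f := fun z ↦ by
  refine differentiableAt_complex_iff_differentiableAt_real.2 ⟨hf z, ?_⟩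
  have cauchyRiemann := (div_eq_zero_iff.1 (h z)).resolve_right two_ne_zero
  rw [smul_eq_mul]
  linear_combination (-I) * cauchyRiemann + fderiv ℝ f z I * I_sq

end Wirtinger

namespace IsPolarSource

variable {K : Set ℂ} {a : ℂ} {β A : ℝ} {f : ℂ → ℂ}

lemma inv_sub_mul (hf : IsPolarSource K a β A f) :
    IsPolarSource K a (β + 1) A fun w ↦ (w - a)⁻¹ * f w where
  aestronglyMeasurable :=
    (by fun_prop : Measurable _).aestronglyMeasurable.mul hf.aestronglyMeasurable
  norm_le w := by
    have := hf.nonneg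
    rcases eq_or_ne w a with rfl | hw
    · rw [sub_self, inv_zero, zero_mul, norm_zero]
      positivity
    · rw [norm_mul, norm_inv, norm_sub_rev w a, neg_add,
        Real.rpow_add (norm_pos_iff.2 (sub_ne_zero.2 hw.symm)), Real.rpow_neg_one, mul_comm,
        ← mul_assoc]
      gcongr
      exact hf.norm_le w
  eq_zero_of_notMem w hw := by rw [hf.eq_zero_of_notMem w hw, mul_zero]

lemma hasDerivAt_cauchyTransform {ε : ℝ} (hf : IsPolarSource K a (-ε) A f) (hK : volume K ≠ ⊤)
    (hε₀ : 0 < ε) (hε₁ : ε ≤ 1) :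
    HasDerivAt (cauchyTransform f) (cauchyTransform (fun w ↦ (w - a)⁻¹ * f w) a) a := by
  set g : ℂ → ℂ := fun w ↦ (w - a)⁻¹ * f w with hg_def
  have hg : IsPolarSource K a (-ε + 1) A g := hf.inv_sub_mul
  have f_eq : f = fun w ↦ (w - a) * g w := by
    ext w
    rcases eq_or_ne w a with rfl | hw
    · simpa [hε₀.ne'] using hf.norm_le w
    · rw [hg_def, mul_inv_cancel_left₀ (sub_ne_zero.2 hw)]
  have transform_eq (z : ℂ) : cauchyTransform f z =
      (z - a) * cauchyTransform g z - (Real.pi : ℂ)⁻¹ * ∫ w, g w := by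
    rw [f_eq]
    exact cauchyTransform_sub_mul (hg.integrable hK (by linarith) (by linarith))
      (hg.integrable_mul_inv hK (by linarith) (by linarith) z) a
  have slope_eq : ∀ z ≠ a, slope (cauchyTransform f) a z = cauchyTransform g z := fun z hz ↦ by
    rw [slope_def_field, transform_eq, transform_eq a]
    field_simp [sub_ne_zero.2 hz]
    ring
  refine hasDerivAt_iff_tendsto_slope.2 (Tendsto.congr' ?_
    ((hg.continuousAt_cauchyTransform hK (by linarith) (by linarith)).tendsto.mono_left
      nhdsWithin_le_nhds))
  filter_upwards [self_mem_nhdsWithin] with z hz using (slope_eq z hz).symm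

end IsPolarSource

namespace IsBoundedSource

variable {K : Set ℂ} {B C ε : ℝ} {f : ℂ → ℂ} {a : ℂ}

lemma const_mul (hf : IsBoundedSource K B f) (c : ℂ) :
    IsBoundedSource K (‖c‖ * B) fun w ↦ c * f w where
  aestronglyMeasurable := hf.aestronglyMeasurable.const_mul c
  norm_le w := by
    rw [norm_mul]
    gcongr
    exact hf.norm_le w
  eq_zero_of_notMem w hw := by rw [hf.eq_zero_of_notMem w hw, mul_zero]

lemma isPolarSource_sub_indicator_ball (hf : IsBoundedSource K B f) (hC : 0 ≤ C) (hε : 0 ≤ ε)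
    (hfa : ∀ w, ‖f w - f a‖ ≤ C * ‖w - a‖ ^ ε) :
    IsPolarSource (K ∪ ball a 1) a (-ε) (C + B)
      fun w ↦ f w + -f a * (ball a 1).indicator 1 w where
  aestronglyMeasurable := hf.aestronglyMeasurable.add
    ((isBoundedSource_indicator_ball a 1).const_mul (-f a)).aestronglyMeasurable
  norm_le w := by
    have := hf.nonneg
    rw [neg_neg, norm_sub_rev]
    by_cases hw : w ∈ ball a 1
    · rw [indicator_of_mem hw, Pi.one_apply, mul_one, ← sub_eq_add_neg]
      refine (hfa w).trans ?_
      gcongr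
      exact le_add_of_nonneg_right this
    · have one_le : 1 ≤ ‖w - a‖ ^ ε :=
        Real.one_le_rpow (by simpa [dist_eq_norm] using hw) hε
      rw [indicator_of_notMem hw, mul_zero, add_zero]
      calc ‖f w‖ ≤ B * 1 := by simpa using hf.norm_le w
        _ ≤ (C + B) * ‖w - a‖ ^ ε := by gcongr; exact le_add_of_nonneg_left hC
  eq_zero_of_notMem w hw := by
    rw [hf.eq_zero_of_notMem w (hw ∘ .inl), indicator_of_notMem (hw ∘ .inr), mul_zero, add_zero]

lemma hasFDerivAt_cauchyTransform (hf : IsBoundedSource K B f) (hK : volume K ≠ ⊤) (hC : 0 ≤ C)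
    (hε₀ : 0 < ε) (hε₁ : ε ≤ 1) (hfa : ∀ w, ‖f w - f a‖ ≤ C * ‖w - a‖ ^ ε) :
    ∃ c : ℂ, HasFDerivAt (cauchyTransform f)
      (c • ContinuousLinearMap.id ℝ ℂ + f a • (conjCLE : ℂ →L[ℝ] ℂ)) a := by
  set χ : ℂ → ℂ := (ball a 1).indicator 1
  set g : ℂ → ℂ := fun w ↦ f w + -f a * χ w
  have hχ : IsBoundedSource (ball a 1) (‖-f a‖ * 1) fun w ↦ -f a * χ w :=
    (isBoundedSource_indicator_ball a 1).const_mul _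
  have hg := (hf.isPolarSource_sub_indicator_ball hC hε₀.le hfa).hasDerivAt_cauchyTransform
    (measure_union_ne_top hK measure_ball_lt_top.ne) hε₀ hε₁
  have near_a : cauchyTransform f =ᶠ[𝓝 a] fun z ↦ cauchyTransform g z + f a * conj (z - a) := by
    filter_upwards [ball_mem_nhds a one_pos] with z hz
    rw [cauchyTransform_add (hf.integrable_mul_inv hK z)
      (hχ.integrable_mul_inv measure_ball_lt_top.ne z), cauchyTransform_const_mul,
      cauchyTransform_indicator_ball hz]
    ring
  have conj_deriv : HasFDerivAt (fun z : ℂ ↦ conj (z - a)) (conjCLE : ℂ →L[ℝ] ℂ) a :=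
    (conjCLE : ℂ →L[ℝ] ℂ).hasFDerivAt.comp a ((hasFDerivAt_id a).sub_const a)
  set c := cauchyTransform (fun w ↦ (w - a)⁻¹ * g w) a
  have hg' : HasFDerivAt (cauchyTransform g) (c • ContinuousLinearMap.id ℝ ℂ) a :=
    (hg.hasFDerivAt.restrictScalars ℝ).congr_fderiv (by ext v; simp [mul_comm])
  exact ⟨c, (hg'.add (conj_deriv.const_mul (f a))).congr_of_eventuallyEq near_a⟩

lemma differentiable_cauchyTransform (hf : IsBoundedSource K B f) (hK : volume K ≠ ⊤)
    (hfε : IsHolder ε f) (hε₀ : 0 < ε) (hε₁ : ε ≤ 1) :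
    Differentiable ℝ (cauchyTransform f) := fun z ↦ by
  obtain ⟨C, hC, hfC⟩ := hfε
  obtain ⟨c, hc⟩ := hf.hasFDerivAt_cauchyTransform hK hC hε₀ hε₁ fun w ↦ hfC w z
  exact hc.differentiableAt

lemma wDbar_cauchyTransform (hf : IsBoundedSource K B f) (hK : volume K ≠ ⊤)
    (hfε : IsHolder ε f) (hε₀ : 0 < ε) (hε₁ : ε ≤ 1) (z : ℂ) :
    wDbar (cauchyTransform f) z = f z := by
  obtain ⟨C, hC, hfC⟩ := hfε
  obtain ⟨c, hc⟩ := hf.hasFDerivAt_cauchyTransform hK hC hε₀ hε₁ fun w ↦ hfC w z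
  exact wDbar_of_hasFDerivAt_smul_id_add_smul_conj hc

end IsBoundedSource

/-! ### Hölder functions -/

lemma tendsto_const_mul_rpow_nhds_zero (C : ℝ) {ε : ℝ} (hε : 0 < ε) :
    Tendsto (fun t : ℝ ↦ C * t ^ ε) (𝓝 0) (𝓝 0) := by
  simpa [Real.zero_rpow hε.ne'] using
    ((Real.continuousAt_rpow_const 0 ε (.inr hε.le)).tendsto.const_mul C)

namespace IsHolder

variable {ε A B : ℝ} {f g : ℂ → ℂ}

lemma add (hf : IsHolder ε f) (hg : IsHolder ε g) : IsHolder ε fun z ↦ f z + g z := by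
  obtain ⟨C, hC, hfC⟩ := hf
  obtain ⟨D, hD, hgD⟩ := hg
  refine ⟨C + D, by positivity, fun z z' ↦ ?_⟩
  rw [add_sub_add_comm, add_mul]
  exact (norm_add_le _ _).trans (add_le_add (hfC z z') (hgD z z'))

lemma const_add (hf : IsHolder ε f) (c : ℂ) : IsHolder ε fun z ↦ c + f z := by
  simpa only [IsHolder, add_sub_add_left_eq_sub] using hf

lemma const_mul (hf : IsHolder ε f) (c : ℂ) : IsHolder ε fun z ↦ c * f z := by
  obtain ⟨C, hC, hfC⟩ := hf
  refine ⟨‖c‖ * C, by positivity, fun z z' ↦ ?_⟩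
  rw [← mul_sub, norm_mul, mul_assoc]
  gcongr
  exact hfC z z'

lemma conj_comp (hf : IsHolder ε f) : IsHolder ε fun z ↦ conj (f z) := by
  obtain ⟨C, hC, hfC⟩ := hf
  refine ⟨C, hC, fun z z' ↦ ?_⟩
  rw [← map_sub, RCLike.norm_conj]
  exact hfC z z'

lemma mul (hf : IsHolder ε f) (hg : IsHolder ε g) (hfA : ∀ z, ‖f z‖ ≤ A) (hgB : ∀ z, ‖g z‖ ≤ B) :
    IsHolder ε fun z ↦ f z * g z := by
  obtain ⟨C, hC, hfC⟩ := hf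
  obtain ⟨D, hD, hgD⟩ := hg
  have hA : 0 ≤ A := (norm_nonneg _).trans (hfA 0)
  have hB : 0 ≤ B := (norm_nonneg _).trans (hgB 0)
  refine ⟨C * B + A * D, by positivity, fun z z' ↦ ?_⟩
  calc ‖f z * g z - f z' * g z'‖ = ‖(f z - f z') * g z + f z' * (g z - g z')‖ := by ring_nf
    _ ≤ ‖f z - f z'‖ * ‖g z‖ + ‖f z'‖ * ‖g z - g z'‖ := by
      simpa only [norm_mul] using norm_add_le ((f z - f z') * g z) (f z' * (g z - g z'))
    _ ≤ (C * ‖z - z'‖ ^ ε) * B + A * (D * ‖z - z'‖ ^ ε) := by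
      gcongr
      exacts [hfC z z', hgB z, hfA z', hgD z z']
    _ = (C * B + A * D) * ‖z - z'‖ ^ ε := by ring

lemma uniformContinuous (hf : IsHolder ε f) (hε : 0 < ε) : UniformContinuous f := by
  obtain ⟨C, -, hfC⟩ := hf
  refine (uniformEquicontinuous_of_continuity_modulus _ (tendsto_const_mul_rpow_nhds_zero C hε)
    (fun _ : Unit ↦ f) fun z z' _ ↦ ?_).uniformContinuous ()
  simpa only [dist_eq_norm] using hfC z z'

lemma comp_contDiff (hf : IsHolder ε f) (hfA : ∀ z, ‖f z‖ ≤ A) {φ : ℂ → ℂ}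
    (hφ : ContDiff ℝ 1 φ) : IsHolder ε fun z ↦ φ (f z) := by
  obtain ⟨C, hC, hfC⟩ := hf
  obtain ⟨L, hL⟩ := hφ.contDiffOn.exists_lipschitzOnWith one_ne_zero (convex_closedBall 0 A)
    (isCompact_closedBall 0 A)
  refine ⟨L * C, by positivity, fun z z' ↦ ?_⟩
  calc ‖φ (f z) - φ (f z')‖ ≤ L * ‖f z - f z'‖ :=
        hL.norm_sub_le (by simpa using hfA z) (by simpa using hfA z')
    _ ≤ L * C * ‖z - z'‖ ^ ε := by
      rw [mul_assoc]
      gcongr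
      exact hfC z z'

lemma of_lipschitzWith {L : ℝ≥0} (hf : LipschitzWith L f) (hfA : ∀ z, ‖f z‖ ≤ A) (hε₀ : 0 ≤ ε)
    (hε₁ : ε ≤ 1) : IsHolder ε f := by
  have hA : 0 ≤ A := (norm_nonneg _).trans (hfA 0)
  refine ⟨L + (A + A), by positivity, fun z z' ↦ ?_⟩
  rcases le_total ‖z - z'‖ 1 with hle | hge
  · calc ‖f z - f z'‖ ≤ L * ‖z - z'‖ := hf.norm_sub_le z z'
      _ ≤ (L + (A + A)) * ‖z - z'‖ ^ ε := by
        gcongr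
        · exact le_add_of_nonneg_right (by positivity)
        · exact Real.self_le_rpow_of_le_one (norm_nonneg _) hle hε₁
  · calc ‖f z - f z'‖ ≤ (A + A) * 1 := by
          rw [mul_one]; exact norm_sub_le_of_le (hfA z) (hfA z')
      _ ≤ (L + (A + A)) * ‖z - z'‖ ^ ε := by
        gcongr (?_ : ℝ) * ?_
        · exact le_add_of_nonneg_left L.2
        · exact Real.one_le_rpow hge hε₀

end IsHolder

/-! ### Uniqueness for the pseudoanalytic equation `∂̄u = Q ū` -/

lemma exists_norm_le_of_tendsto_cocompact_zero {X E : Type*} [TopologicalSpace X]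
    [NormedAddCommGroup E] {f : X → E} (hf : Continuous f)
    (hf₀ : Tendsto f (cocompact X) (𝓝 0)) : ∃ A, ∀ x, ‖f x‖ ≤ A := by
  obtain ⟨A, hA⟩ :=
    (ZeroAtInftyContinuousMap.isBounded_range ⟨⟨f, hf⟩, hf₀⟩).exists_norm_le
  exact ⟨A, fun x ↦ hA _ (mem_range_self x)⟩

namespace IsBoundedSource

variable {K : Set ℂ} {A B ε : ℝ} {f g h : ℂ → ℂ}

lemma mul (hf : IsBoundedSource K A f) (hg : AEStronglyMeasurable g) (hgB : ∀ z, ‖g z‖ ≤ B) :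
    IsBoundedSource K (A * B) fun z ↦ f z * g z where
  aestronglyMeasurable := hf.aestronglyMeasurable.mul hg
  norm_le z := by
    have := hf.nonneg
    rw [norm_mul]
    gcongr
    exacts [hf.norm_le z, hgB z]
  eq_zero_of_notMem z hz := by rw [hf.eq_zero_of_notMem z hz, zero_mul]

lemma eq_cauchyTransform (hf : IsBoundedSource K A f) (hK : Bornology.IsBounded K)
    (hfε : IsHolder ε f) (hε₀ : 0 < ε) (hε₁ : ε ≤ 1) (hh : Differentiable ℝ h)
    (hhf : ∀ z, wDbar h z = f z) (hh₀ : Tendsto h (cocompact ℂ) (𝓝 0)) :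
    h = cauchyTransform f := by
  have hCf := hf.differentiable_cauchyTransform hK.measure_lt_top.ne hfε hε₀ hε₁
  have holomorphic : Differentiable ℂ fun z ↦ h z - cauchyTransform f z :=
    differentiable_complex_of_wDbar_eq_zero (hh.sub hCf) fun z ↦ by
      rw [wDbar_sub (hh z) (hCf z), hhf,
        hf.wDbar_cauchyTransform hK.measure_lt_top.ne hfε hε₀ hε₁, sub_self]
  ext z
  refine sub_eq_zero.1 (holomorphic.apply_eq_of_tendsto_cocompact z ?_)
  simpa only [sub_zero] using hh₀.sub (hf.tendsto_cauchyTransform hK)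

lemma norm_cexp_cauchyTransform_le (hf : IsBoundedSource K A f) (hK : volume K ≠ ⊤) (z : ℂ) :
    ‖cexp (cauchyTransform f z)‖ ≤ Real.exp (cauchyBound K * A) := by
  rw [norm_exp]
  gcongr
  exact (re_le_norm _).trans (hf.norm_cauchyTransform_le hK z)

lemma norm_cexp_neg_cauchyTransform_le (hf : IsBoundedSource K A f) (hK : volume K ≠ ⊤) (z : ℂ) :
    ‖cexp (-cauchyTransform f z)‖ ≤ Real.exp (cauchyBound K * A) := by
  rw [norm_exp]
  gcongr
  exact (re_le_norm _).trans (by rw [norm_neg]; exact hf.norm_cauchyTransform_le hK z)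

-- The integrating factor `exp (-cauchyTransform f)` reduces the equation to `∂̄h = g`.
lemma norm_le_of_wDbar_eq_mul_add (hf : IsBoundedSource K A f) (hg : IsBoundedSource K B g)
    (hK : Bornology.IsBounded K) (hfε : IsHolder ε f) (hgε : IsHolder ε g) (hε₀ : 0 < ε)
    (hε₁ : ε < 1) (hh : Differentiable ℝ h) (hhfg : ∀ z, wDbar h z = f z * h z + g z)
    (hh₀ : Tendsto h (cocompact ℂ) (𝓝 0)) (z : ℂ) :
    ‖h z‖ ≤ Real.exp (cauchyBound K * A) *
      (cauchyBound K * (B * Real.exp (cauchyBound K * A))) := by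
  have hKv : volume K ≠ ⊤ := hK.measure_lt_top.ne
  set u := cauchyTransform f
  have hu : Differentiable ℝ u := hf.differentiable_cauchyTransform hKv hfε hε₀ hε₁.le
  have hE : Differentiable ℝ fun z ↦ cexp (-u z) := hu.neg.cexp
  have hEε : IsHolder ε fun z ↦ cexp (-u z) :=
    (hf.isHolder_cauchyTransform hKv hε₀ hε₁).comp_contDiff (φ := fun w ↦ cexp (-w))
      (hf.norm_cauchyTransform_le hKv) (by fun_prop)
  have hE_le := hf.norm_cexp_neg_cauchyTransform_le hKv
  have wDbar_E (z : ℂ) : wDbar (fun z ↦ cexp (-u z)) z = cexp (-u z) * -f z := by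
    have := wDbar_const_mul (-1) (hu z)
    simp only [neg_one_mul] at this
    rw [wDbar_cexp (f := fun z ↦ -u z) (hu z).neg, this,
      hf.wDbar_cauchyTransform hKv hfε hε₀ hε₁.le]
  have hgE := hg.mul hE.continuous.aestronglyMeasurable hE_le
  have representation : (fun z ↦ h z * cexp (-u z)) = cauchyTransform fun z ↦ g z * cexp (-u z) :=
    hgE.eq_cauchyTransform hK (hgε.mul hEε hg.norm_le hE_le) hε₀ hε₁.le (hh.mul hE)
      (fun z ↦ by rw [wDbar_mul (hh z) (hE z), wDbar_E, hhfg]; ring)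
      (hh₀.zero_mul_isBoundedUnder_le (isBoundedUnder_of ⟨_, hE_le⟩))
  calc ‖h z‖ = ‖cexp (u z) * (h z * cexp (-u z))‖ := by
        rw [mul_left_comm, ← Complex.exp_add, add_neg_cancel, Complex.exp_zero, mul_one]
    _ ≤ _ := by
      rw [norm_mul, congr_fun representation z]
      gcongr
      exacts [hf.norm_cexp_cauchyTransform_le hKv z, hgE.norm_cauchyTransform_le hKv z]

end IsBoundedSource

section ConjRegularization

/-- The coefficient in `w̄ = conjQuotient t w * w + conjRemainder t w`, a smooth substitute for
`w̄ / w`. -/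
noncomputable def conjQuotient (t : ℝ) (w : ℂ) : ℂ := (‖w‖ ^ 2 + t ^ 2)⁻¹ • conj w ^ 2

/-- The error term in `w̄ = conjQuotient t w * w + conjRemainder t w`, uniformly small as
`t → 0`. -/
noncomputable def conjRemainder (t : ℝ) (w : ℂ) : ℂ := (t ^ 2 / (‖w‖ ^ 2 + t ^ 2)) • conj w

variable {t : ℝ}

lemma conjQuotient_mul_add_conjRemainder (ht : t ≠ 0) (w : ℂ) :
    conjQuotient t w * w + conjRemainder t w = conj w := by
  have conj_sq_mul : conj w ^ 2 * w = (‖w‖ ^ 2) • conj w := by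
    rw [real_smul, ofReal_pow, ← conj_mul']
    ring
  rw [conjQuotient, conjRemainder, smul_mul_assoc, conj_sq_mul, smul_smul, ← add_smul,
    inv_mul_eq_div, ← add_div, div_self (by positivity), one_smul]

lemma norm_conjQuotient_le (t : ℝ) (w : ℂ) : ‖conjQuotient t w‖ ≤ 1 := by
  rw [conjQuotient, norm_smul, norm_pow, RCLike.norm_conj, Real.norm_of_nonneg (by positivity),
    inv_mul_eq_div]
  exact div_le_one_of_le₀ (le_add_of_nonneg_right (sq_nonneg t)) (by positivity)

lemma norm_conjRemainder_le (ht : 0 < t) (w : ℂ) : ‖conjRemainder t w‖ ≤ t := by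
  rw [conjRemainder, norm_smul, RCLike.norm_conj, Real.norm_of_nonneg (by positivity),
    div_mul_eq_mul_div, div_le_iff₀ (by positivity)]
  nlinarith [mul_nonneg ht.le (sq_nonneg (‖w‖ - t)), mul_nonneg ht.le (sq_nonneg (‖w‖ + t))]

lemma contDiff_conjQuotient (ht : t ≠ 0) : ContDiff ℝ 1 (conjQuotient t) :=
  (((contDiff_norm_sq ℝ).add contDiff_const).inv fun _ ↦ by positivity).smul
    (conjCLE.contDiff.pow 2)

lemma contDiff_conjRemainder (ht : t ≠ 0) : ContDiff ℝ 1 (conjRemainder t) :=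
  (contDiff_const.div ((contDiff_norm_sq ℝ).add contDiff_const) fun _ ↦ by positivity).smul
    conjCLE.contDiff

end ConjRegularization

/-- A solution of the pseudoanalytic (Vekua) equation `∂̄u = Q ū`. -/
structure IsPseudoanalytic (Q u : ℂ → ℂ) : Prop where
  differentiable : Differentiable ℝ u
  wDbar_eq : ∀ z, wDbar u z = Q z * conj (u z)

theorem IsPseudoanalytic.eq_zero {K : Set ℂ} {B ε : ℝ} {Q d : ℂ → ℂ}
    (hd : IsPseudoanalytic Q d) (hQ : IsBoundedSource K B Q) (hK : Bornology.IsBounded K)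
    (hQε : IsHolder ε Q) (hε₀ : 0 < ε) (hε₁ : ε < 1) (hdε : IsHolder ε d)
    (hd₀ : Tendsto d (cocompact ℂ) (𝓝 0)) (z : ℂ) :
    d z = 0 := by
  have d_cont := hd.differentiable.continuous
  obtain ⟨D, hD⟩ := exists_norm_le_of_tendsto_cocompact_zero d_cont hd₀
  set M := Real.exp (cauchyBound K * (B * 1))
  have bound : ∀ t > 0, ‖d z‖ ≤ M * (cauchyBound K * (B * t * M)) := fun t ht ↦ by
    have hα := contDiff_conjQuotient ht.ne'
    have hρ := contDiff_conjRemainder ht.ne'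
    refine IsBoundedSource.norm_le_of_wDbar_eq_mul_add
      (hQ.mul (hα.continuous.comp d_cont).aestronglyMeasurable
        fun z ↦ norm_conjQuotient_le t (d z))
      (hQ.mul (hρ.continuous.comp d_cont).aestronglyMeasurable
        fun z ↦ norm_conjRemainder_le ht (d z)) hK
      (hQε.mul (hdε.comp_contDiff hD hα) hQ.norm_le fun z ↦ norm_conjQuotient_le t (d z))
      (hQε.mul (hdε.comp_contDiff hD hρ) hQ.norm_le fun z ↦ norm_conjRemainder_le ht (d z))
      hε₀ hε₁ hd.differentiable (fun z ↦ ?_) hd₀ z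
    rw [hd.wDbar_eq, comp_apply, comp_apply, mul_assoc, ← mul_add,
      conjQuotient_mul_add_conjRemainder ht.ne']
  have bound_tendsto :
      Tendsto (fun t : ℝ ↦ M * (cauchyBound K * (B * t * M))) (𝓝[>] 0) (𝓝 0) := by
    have : Continuous fun t : ℝ ↦ M * (cauchyBound K * (B * t * M)) := by fun_prop
    exact tendsto_nhdsWithin_of_tendsto_nhds (this.tendsto' 0 0 (by simp))
  exact norm_le_zero_iff.1
    (ge_of_tendsto bound_tendsto (by filter_upwards [self_mem_nhdsWithin] with t using bound t))

/-! ### Existence for the pseudoanalytic equation -/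

lemma exists_eq_add_of_isCompactOperator {𝕜 X : Type*} [NontriviallyNormedField 𝕜]
    [NormedAddCommGroup X] [NormedSpace 𝕜 X] [CompleteSpace X] {T : X →L[𝕜] X}
    (hT : IsCompactOperator T) (hT_fixed : ∀ x, T x = x → x = 0) (y : X) : ∃ x, x = y + T x := by
  rcases hT.hasEigenvalue_or_mem_resolventSet (one_ne_zero (α := 𝕜)) with eigenvalue | resolvent
  · obtain ⟨x, hx⟩ := eigenvalue.exists_hasEigenvector
    exact absurd (hT_fixed x (by simpa using hx.apply_eq_smul)) hx.2
  · rw [spectrum.mem_resolventSet_iff, map_one] at resolvent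
    obtain ⟨S, hS⟩ := resolvent.exists_right_inv
    have : S y - T (S y) = y := DFunLike.congr_fun hS y
    exact ⟨S y, eq_add_of_sub_eq this⟩

/-- The function `Q ū` on `ℂ` for `u` given on `K` only, with `u` extended by zero. -/
noncomputable def conjSource {K : Set ℂ} (Q : ℂ → ℂ) (u : K →ᵇ ℂ) (w : ℂ) : ℂ :=
  Q w * conj (extend Subtype.val u 0 w)

section ConjSource

variable {K : Set ℂ} {Q : ℂ → ℂ}

lemma conjSource_apply (u : K →ᵇ ℂ) (w : K) : conjSource Q u w = Q w * conj (u w) := by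
  rw [conjSource, Subtype.val_injective.extend_apply]

lemma conjSource_add (u v : K →ᵇ ℂ) :
    conjSource Q (u + v) = fun w ↦ conjSource Q u w + conjSource Q v w := by
  ext w
  have extend_add := congr_fun (extend_add (Subtype.val : K → ℂ) u v 0 0) w
  rw [zero_add, Pi.add_apply] at extend_add
  simp only [conjSource, BoundedContinuousFunction.coe_add, extend_add, map_add, mul_add]

lemma conjSource_smul (c : ℝ) (u : K →ᵇ ℂ) :
    conjSource Q (c • u) = fun w ↦ (c : ℂ) * conjSource Q u w := by
  ext w
  have extend_smul := congr_fun (extend_smul c (Subtype.val : K → ℂ) u 0) w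
  rw [smul_zero, Pi.smul_apply] at extend_smul
  have coe_smul : ⇑(c • u) = c • ⇑u := rfl
  simp only [conjSource, coe_smul, extend_smul, real_smul, map_mul, conj_ofReal, mul_left_comm]

lemma norm_extend_zero_le (u : K →ᵇ ℂ) (w : ℂ) : ‖extend Subtype.val u 0 w‖ ≤ ‖u‖ := by
  by_cases hw : w ∈ K
  · exact (congr_arg norm (Subtype.val_injective.extend_apply u 0 ⟨w, hw⟩)).trans_le
      (u.norm_coe_le_norm _)
  · rw [extend_apply' _ _ _ (by simpa using hw), Pi.zero_apply, norm_zero]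
    exact norm_nonneg u

end ConjSource

namespace IsBoundedSource

variable {K : Set ℂ} {B ε : ℝ} {Q : ℂ → ℂ}

lemma isBoundedSource_conjSource (hQ : IsBoundedSource K B Q) (hK : MeasurableSet K) (u : K →ᵇ ℂ) :
    IsBoundedSource K (B * ‖u‖) (conjSource Q u) :=
  hQ.mul (continuous_conj.measurable.comp ((MeasurableEmbedding.subtype_coe hK).measurable_extend
    u.continuous.measurable measurable_zero)).aestronglyMeasurable
    fun w ↦ by rw [RCLike.norm_conj]; exact norm_extend_zero_le u w

/-- The operator `u ↦ C(Q ū)` on functions on the compact set `K` that carries `Q`. It is only real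
linear. -/
noncomputable def conjCauchyOperator (hQ : IsBoundedSource K B Q) (hK : IsCompact K) :
    (K →ᵇ ℂ) →L[ℝ] (K →ᵇ ℂ) :=
  LinearMap.mkContinuous
    { toFun u := .ofNormedAddCommGroup (fun z : K ↦ cauchyTransform (conjSource Q u) z)
        (((hQ.isBoundedSource_conjSource hK.measurableSet u).continuous_cauchyTransform
          hK.measure_lt_top.ne).comp continuous_subtype_val)
        (cauchyBound K * (B * ‖u‖))
        fun z ↦ (hQ.isBoundedSource_conjSource hK.measurableSet u).norm_cauchyTransform_le
          hK.measure_lt_top.ne z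
      map_add' u v := by
        ext z
        have integrable (u : K →ᵇ ℂ) :=
          (hQ.isBoundedSource_conjSource hK.measurableSet u).integrable_mul_inv
            hK.measure_lt_top.ne z
        simp [conjSource_add, cauchyTransform_add (integrable u) (integrable v)]
      map_smul' c u := by
        ext z
        simp [conjSource_smul, cauchyTransform_const_mul] }
    (cauchyBound K * B) fun u ↦ by
      have := cauchyBound_nonneg K
      have := hQ.nonneg
      rw [mul_assoc]
      exact (BoundedContinuousFunction.norm_le (by positivity)).2 fun z ↦
        (hQ.isBoundedSource_conjSource hK.measurableSet u).norm_cauchyTransform_le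
          hK.measure_lt_top.ne z

lemma isCompactOperator_conjCauchyOperator (hQ : IsBoundedSource K B Q) (hK : IsCompact K) :
    IsCompactOperator (hQ.conjCauchyOperator hK) := by
  have : CompactSpace K := isCompact_iff_compactSpace.1 hK
  have hKv : volume K ≠ ⊤ := hK.measure_lt_top.ne
  set T := hQ.conjCauchyOperator hK
  have hB := hQ.nonneg
  have hCauchy := cauchyBound_nonneg K
  have hRiesz := rieszBound_nonneg volume (1 + 1 / 2) K
  have source (u : K →ᵇ ℂ) := hQ.isBoundedSource_conjSource hK.measurableSet u
  refine ⟨closure (T '' closedBall 0 1), ?_, mem_of_superset (closedBall_mem_nhds 0 one_pos)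
    fun u hu ↦ subset_closure (mem_image_of_mem T hu)⟩
  refine BoundedContinuousFunction.arzela_ascoli (closedBall 0 (cauchyBound K * (B * 1)))
    (isCompact_closedBall _ _) _ ?_ (equicontinuous_of_continuity_modulus _
      (tendsto_const_mul_rpow_nhds_zero
        (4 * Real.pi⁻¹ * rieszBound volume (1 + 1 / 2) K * (B * 1)) one_half_pos) _ ?_)
  · rintro _ z ⟨u, hu, rfl⟩
    rw [mem_closedBall_zero_iff] at hu ⊢
    refine ((source u).norm_cauchyTransform_le hKv z).trans ?_
    gcongr
  · rintro z z' ⟨_, u, hu, rfl⟩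
    rw [mem_closedBall_zero_iff] at hu
    rw [dist_eq_norm, Subtype.dist_eq, dist_eq_norm]
    refine ((source u).norm_cauchyTransform_sub_le hKv one_half_pos one_half_lt_one z z').trans ?_
    gcongr

lemma isPseudoanalytic_const_add_cauchyTransform (hQ : IsBoundedSource K B Q) (hK : IsCompact K)
    (hQε : IsHolder ε Q) (hε₀ : 0 < ε) (hε₁ : ε < 1) {c : ℂ} {u : K →ᵇ ℂ}
    (hu : ∀ z : K, u z = c + cauchyTransform (conjSource Q u) z) :
    IsPseudoanalytic Q fun z ↦ c + cauchyTransform (conjSource Q u) z := by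
  have hKv : volume K ≠ ⊤ := hK.measure_lt_top.ne
  have source := hQ.isBoundedSource_conjSource hK.measurableSet u
  set U : ℂ → ℂ := fun z ↦ c + cauchyTransform (conjSource Q u) z
  have source_eq : conjSource Q u = fun z ↦ Q z * conj (U z) := by
    ext z
    by_cases hz : z ∈ K
    · exact (conjSource_apply u ⟨z, hz⟩).trans (by rw [hu])
    · rw [source.eq_zero_of_notMem z hz, hQ.eq_zero_of_notMem z hz, zero_mul]
  have hUε : IsHolder ε U := (source.isHolder_cauchyTransform hKv hε₀ hε₁).const_add c
  have hU_le (z : ℂ) : ‖conj (U z)‖ ≤ ‖c‖ + cauchyBound K * (B * ‖u‖) := by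
    rw [RCLike.norm_conj]
    exact norm_add_le_of_le le_rfl (source.norm_cauchyTransform_le hKv z)
  have hsε : IsHolder ε (conjSource Q u) :=
    source_eq ▸ hQε.mul hUε.conj_comp hQ.norm_le hU_le
  have diff := source.differentiable_cauchyTransform hKv hsε hε₀ hε₁.le
  refine ⟨diff.const_add c, fun z ↦ ?_⟩
  rw [wDbar_add (differentiableAt_const c) (diff z), wDbar_const, zero_add,
    source.wDbar_cauchyTransform hKv hsε hε₀ hε₁.le]
  exact congr_fun source_eq z

theorem exists_isPseudoanalytic_one_add_cauchyTransform (hQ : IsBoundedSource K B Q)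
    (hK : IsCompact K) (hQε : IsHolder ε Q) (hε₀ : 0 < ε) (hε₁ : ε < 1) :
    ∃ (A : ℝ) (f : ℂ → ℂ), IsBoundedSource K A f ∧
      IsPseudoanalytic Q fun z ↦ 1 + cauchyTransform f z := by
  have source (u : K →ᵇ ℂ) := hQ.isBoundedSource_conjSource hK.measurableSet u
  have fixed (u : K →ᵇ ℂ) (hu : hQ.conjCauchyOperator hK u = u) : u = 0 := by
    have hu' (z : K) : cauchyTransform (conjSource Q u) z = u z := DFunLike.congr_fun hu z
    have pseudo := hQ.isPseudoanalytic_const_add_cauchyTransform (c := 0) hK hQε hε₀ hε₁ (u := u)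
      fun z ↦ by rw [zero_add, hu']
    simp only [zero_add] at pseudo
    ext z
    rw [← hu']
    exact pseudo.eq_zero hQ hK.isBounded hQε hε₀ hε₁
      ((source u).isHolder_cauchyTransform hK.measure_lt_top.ne hε₀ hε₁)
      ((source u).tendsto_cauchyTransform hK.isBounded) z
  obtain ⟨u, hu⟩ := exists_eq_add_of_isCompactOperator
    (hQ.isCompactOperator_conjCauchyOperator hK) fixed (.const K 1)
  exact ⟨_, _, source u, hQ.isPseudoanalytic_const_add_cauchyTransform hK hQε hε₀ hε₁
    fun z ↦ DFunLike.congr_fun hu z⟩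

end IsBoundedSource

/-! ### Uniformly continuous functions in `L^p` -/

theorem tendsto_cocompact_zero_of_memLp {E F : Type*} [NormedAddCommGroup E] [NormedSpace ℝ E]
    [FiniteDimensional ℝ E] [MeasurableSpace E] [BorelSpace E] {μ : Measure E}
    [μ.IsAddHaarMeasure] [NormedAddCommGroup F] {f : E → F} {p : ℝ≥0∞} (hf : UniformContinuous f)
    (hfp : MemLp f p μ) (hp : p ≠ 0) (hp_top : p ≠ ⊤) : Tendsto f (cocompact E) (𝓝 0) := by
  rw [NormedAddGroup.tendsto_nhds_zero]
  intro η hη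
  obtain ⟨δ, hδ, hfδ⟩ := Metric.uniformContinuous_iff.1 hf (η / 2) (half_pos hη)
  set S : Set E := {x | (η / 2).toNNReal ≤ ‖f x‖₊}
  have hS : μ S < ⊤ := hfp.meas_ge_lt_top hp hp_top (by simpa using hη)
  have hS_closed : IsClosed S := isClosed_le continuous_const hf.continuous.nnnorm
  obtain ⟨K, -, hK, hSK⟩ := hS_closed.measurableSet.exists_isCompact_sdiff_lt hS.ne
    (measure_ball_pos μ (0 : E) hδ).ne'
  filter_upwards [hK.cthickening (r := δ).compl_mem_cocompact] with x hx
  by_contra! hfx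
  have ball_subset : ball x δ ⊆ S \ K := fun y hy ↦ by
    refine ⟨?_, fun hyK ↦ hx (mem_cthickening_of_dist_le x y δ K hyK (mem_ball'.1 hy).le)⟩
    have : ‖f x‖ - ‖f y‖ < η / 2 := (norm_sub_norm_le _ _).trans_lt <| by
      simpa only [dist_eq_norm] using hfδ (mem_ball'.1 hy)
    exact Real.toNNReal_le_iff_le_coe.2 (by rw [coe_nnnorm]; linarith)
  refine hSK.not_ge ?_
  rw [← Measure.addHaar_ball_center μ x δ]
  exact measure_mono ball_subset

/-! ### Normalized pseudoanalytic functions -/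

/-- The class in which deviations from the normalization are measured: `f` is Hölder continuous of
exponent `ε` and lies in `L^p`. -/
structure IsHolderLp (ε : ℝ) (p : ℝ≥0∞) (f : ℂ → ℂ) : Prop where
  isHolder : IsHolder ε f
  memLp : MemLp f p

namespace IsHolderLp

variable {ε : ℝ} {p : ℝ≥0∞} {f g : ℂ → ℂ}

lemma add (hf : IsHolderLp ε p f) (hg : IsHolderLp ε p g) : IsHolderLp ε p fun z ↦ f z + g z :=
  ⟨hf.isHolder.add hg.isHolder, hf.memLp.add hg.memLp⟩

lemma const_mul (hf : IsHolderLp ε p f) (c : ℂ) : IsHolderLp ε p fun z ↦ c * f z :=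
  ⟨hf.isHolder.const_mul c, hf.memLp.const_mul c⟩

lemma sub (hf : IsHolderLp ε p f) (hg : IsHolderLp ε p g) : IsHolderLp ε p fun z ↦ f z - g z := by
  simpa only [neg_one_mul, ← sub_eq_add_neg] using hf.add (hg.const_mul (-1))

lemma conj_comp (hf : IsHolderLp ε p f) : IsHolderLp ε p fun z ↦ conj (f z) :=
  ⟨hf.isHolder.conj_comp, hf.memLp.star⟩

lemma conj_comp_sub_one (hf : IsHolderLp ε p fun z ↦ f z - 1) :
    IsHolderLp ε p fun z ↦ conj (f z) - 1 := by
  simpa only [map_sub, map_one] using hf.conj_comp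

lemma tendsto_cocompact_zero (hf : IsHolderLp ε p f) (hε : 0 < ε) (hp : p ≠ 0) (hp_top : p ≠ ⊤) :
    Tendsto f (cocompact ℂ) (𝓝 0) :=
  tendsto_cocompact_zero_of_memLp (hf.isHolder.uniformContinuous hε) hf.memLp hp hp_top

lemma mul_of_norm_eq_one (hf : IsHolderLp ε p f) (hg : IsHolder ε g) (hg_norm : ∀ z, ‖g z‖ = 1)
    (hε : 0 < ε) (hp : p ≠ 0) (hp_top : p ≠ ⊤) : IsHolderLp ε p fun z ↦ g z * f z := by
  have f_continuous := (hf.isHolder.uniformContinuous hε).continuous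
  have g_continuous := (hg.uniformContinuous hε).continuous
  obtain ⟨A, hA⟩ := exists_norm_le_of_tendsto_cocompact_zero f_continuous
    (hf.tendsto_cocompact_zero hε hp hp_top)
  refine ⟨hg.mul hf.isHolder (fun z ↦ (hg_norm z).le) hA, hf.memLp.of_le
    (g_continuous.mul f_continuous).aestronglyMeasurable (ae_of_all _ fun z ↦ ?_)⟩
  rw [norm_mul, hg_norm, one_mul]

end IsHolderLp

/-- A solution `u` of `∂̄u = Q ū` normalized to be `1` at infinity, in the sense that `u - 1` is
Hölder continuous and lies in `L^p`. -/
structure IsNormalizedPseudoanalytic (ε : ℝ) (p : ℝ≥0∞) (Q u : ℂ → ℂ) : Prop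
    extends IsPseudoanalytic Q u where
  isHolderLp_sub_one : IsHolderLp ε p fun z ↦ u z - 1

lemma IsPseudoanalytic.sub {Q u v : ℂ → ℂ} (hu : IsPseudoanalytic Q u)
    (hv : IsPseudoanalytic Q v) : IsPseudoanalytic Q fun z ↦ u z - v z where
  differentiable := hu.differentiable.sub hv.differentiable
  wDbar_eq z := by
    rw [wDbar_sub (hu.differentiable z) (hv.differentiable z), hu.wDbar_eq, hv.wDbar_eq, map_sub,
      mul_sub]

theorem IsBoundedSource.existsUnique_isNormalizedPseudoanalytic {K : Set ℂ} {B ε : ℝ} {p : ℝ≥0∞}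
    {Q : ℂ → ℂ} (hQ : IsBoundedSource K B Q) (hK : IsCompact K) (hQε : IsHolder ε Q)
    (hε₀ : 0 < ε) (hε₁ : ε < 1) (hp : 2 < p) (hp_top : p ≠ ⊤) :
    ∃! u, IsNormalizedPseudoanalytic ε p Q u := by
  obtain ⟨A, f, hf, hu⟩ := hQ.exists_isPseudoanalytic_one_add_cauchyTransform hK hQε hε₀ hε₁
  have exists_normalized : ∃ u, IsNormalizedPseudoanalytic ε p Q u := by
    refine ⟨_, hu, ?_⟩
    simpa only [add_sub_cancel_left] using
      (⟨hf.isHolder_cauchyTransform hK.measure_lt_top.ne hε₀ hε₁,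
        hf.memLp_cauchyTransform hK.isBounded hp hp_top⟩ : IsHolderLp ε p (cauchyTransform f))
  refine existsUnique_of_exists_of_unique exists_normalized fun u v hu hv ↦ ?_
  have sub_isHolderLp : IsHolderLp ε p fun z ↦ u z - v z := by
    simpa only [sub_sub_sub_cancel_right] using hu.isHolderLp_sub_one.sub hv.isHolderLp_sub_one
  ext z
  exact sub_eq_zero.1 ((hu.toIsPseudoanalytic.sub hv.toIsPseudoanalytic).eq_zero hQ hK.isBounded
    hQε hε₀ hε₁ sub_isHolderLp.isHolder
    (sub_isHolderLp.tendsto_cocompact_zero hε₀ (pos_of_gt hp).ne' hp_top) z)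

/-! ### The first column of the system -/

/-- The first column `(m₁₁, m₂₁) = (a, b)` of a normalized solution `m` of the system with
potential `q` and spectral parameter `k`. -/
structure IsFirstColumn (ε : ℝ) (p : ℝ≥0∞) (q : ℂ → ℂ) (k : ℂ) (a b : ℂ → ℂ) : Prop where
  differentiable_fst : Differentiable ℝ a
  differentiable_snd : Differentiable ℝ b
  wDbar_fst : ∀ z, wDbar a z = q z * b z
  wD_snd : ∀ z, wD b z + I * k * b z = conj (q z) * a z
  isHolderLp_fst : IsHolderLp ε p fun z ↦ a z - 1
  isHolderLp_snd : IsHolderLp ε p b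

section FirstColumnZero

variable {ε : ℝ} {p : ℝ≥0∞} {q a b u v : ℂ → ℂ}

lemma IsFirstColumn.isNormalizedPseudoanalytic (h : IsFirstColumn ε p q 0 a b) {c : ℝ}
    (hc : c * c = 1) :
    IsNormalizedPseudoanalytic ε p (fun z ↦ c * q z) fun z ↦ a z + c * conj (b z) where
  differentiable := h.differentiable_fst.add (h.differentiable_snd.star.const_mul (c : ℂ))
  wDbar_eq z := by
    have conj_differentiable : DifferentiableAt ℝ (fun w ↦ conj (b w)) z :=
      (h.differentiable_snd z).star
    have wD_snd := h.wD_snd z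
    rw [mul_zero, zero_mul, add_zero] at wD_snd
    have hc' : (c : ℂ) * c = 1 := mod_cast hc
    rw [wDbar_add (h.differentiable_fst z) (conj_differentiable.const_mul _),
      wDbar_const_mul _ conj_differentiable, wDbar_conj (h.differentiable_snd z), h.wDbar_fst,
      wD_snd]
    simp only [map_add, map_mul, conj_conj, conj_ofReal]
    linear_combination -(q z * b z) * hc'
  isHolderLp_sub_one := by
    simpa only [sub_add_eq_add_sub] using
      h.isHolderLp_fst.add (h.isHolderLp_snd.conj_comp.const_mul c)

lemma IsNormalizedPseudoanalytic.isFirstColumn (hu : IsNormalizedPseudoanalytic ε p q u)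
    (hv : IsNormalizedPseudoanalytic ε p (fun z ↦ -q z) v) :
    IsFirstColumn ε p q 0 (fun z ↦ 2⁻¹ * (u z + v z)) fun z ↦ conj (2⁻¹ * (u z - v z)) where
  differentiable_fst := (hu.differentiable.add hv.differentiable).const_mul _
  differentiable_snd := ((hu.differentiable.sub hv.differentiable).const_mul _).star
  wDbar_fst z := by
    have hud := hu.differentiable z
    have hvd := hv.differentiable z
    rw [wDbar_const_mul _ (hud.fun_add hvd), wDbar_add hud hvd, hu.wDbar_eq, hv.wDbar_eq]
    simp only [map_mul, map_sub, map_inv₀, conj_ofNat]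
    ring
  wD_snd z := by
    have hud := hu.differentiable z
    have hvd := hv.differentiable z
    rw [wD_conj ((hud.fun_sub hvd).const_mul _), wDbar_const_mul _ (hud.fun_sub hvd),
      wDbar_sub hud hvd, hu.wDbar_eq, hv.wDbar_eq]
    simp only [map_mul, map_sub, map_neg, map_inv₀, conj_ofNat, conj_conj]
    ring
  isHolderLp_fst := by
    convert (hu.isHolderLp_sub_one.add hv.isHolderLp_sub_one).const_mul 2⁻¹ using 2
    ring
  isHolderLp_snd := by
    have := (hu.isHolderLp_sub_one.sub hv.isHolderLp_sub_one).const_mul 2⁻¹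
    simp only [sub_sub_sub_cancel_right] at this
    exact this.conj_comp

end FirstColumnZero

/-- The unimodular function `exp (i (kz + conj (kz)))`. Multiplying `m₂₁` by it turns `∂ + ik` into
`∂`. -/
noncomputable def phase (k z : ℂ) : ℂ := cexp (I * (k * z + conj (k * z)))

section Phase

variable (k z : ℂ)

lemma phase_eq_cexp_ofReal_mul_I : phase k z = cexp ((2 * (k * z).re : ℝ) * I) := by
  rw [phase, add_conj, mul_comm]

lemma norm_phase : ‖phase k z‖ = 1 := by
  rw [phase_eq_cexp_ofReal_mul_I, norm_exp_ofReal_mul_I]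

lemma phase_add (w : ℂ) : phase k (z + w) = phase k z * phase k w := by
  rw [phase, phase, phase, ← Complex.exp_add, mul_add k, map_add]
  ring_nf

lemma phase_neg_mul_phase : phase (-k) z * phase k z = 1 := by
  rw [phase, phase, ← Complex.exp_add, neg_mul, map_neg, ← Complex.exp_zero]
  ring_nf

lemma conj_phase_neg : conj (phase (-k) z) = phase k z := by
  rw [phase, phase, ← exp_conj]
  simp only [map_mul, map_add, map_neg, conj_I, conj_conj]
  ring_nf

lemma hasFDerivAt_phase_exponent :
    HasFDerivAt (fun w : ℂ ↦ I * (k * w + conj (k * w)))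
      ((I * k) • ContinuousLinearMap.id ℝ ℂ + (I * conj k) • (conjCLE : ℂ →L[ℝ] ℂ)) z := by
  refine (((hasFDerivAt_id z).const_smul (I * k)).add
    ((conjCLE : ℂ →L[ℝ] ℂ).hasFDerivAt.const_smul (I * conj k))).congr_of_eventuallyEq
      (.of_forall fun w ↦ ?_)
  simp only [map_mul, Pi.add_apply, Pi.smul_apply, id_eq, ContinuousLinearEquiv.coe_coe,
    conjCLE_apply, smul_eq_mul]
  ring

lemma differentiable_phase : Differentiable ℝ (phase k) :=
  fun z ↦ (hasFDerivAt_phase_exponent k z).differentiableAt.cexp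

lemma wD_phase : wD (phase k) z = phase k z * (I * k) := by
  have phase_eq : phase k = fun w ↦ conj (phase (-k) w) := funext fun w ↦ (conj_phase_neg k w).symm
  have exponent := hasFDerivAt_phase_exponent (-k) z
  have wDbar_phase : wDbar (phase (-k)) z = phase (-k) z * (I * conj (-k)) := by
    rw [← wDbar_of_hasFDerivAt_smul_id_add_smul_conj exponent]
    exact wDbar_cexp exponent.differentiableAt
  conv_lhs => rw [phase_eq]
  rw [wD_conj (differentiable_phase (-k) z), wDbar_phase, map_mul, conj_phase_neg]
  simp only [map_mul, map_neg, conj_I, conj_conj, neg_mul_neg]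

lemma lipschitzWith_phase : LipschitzWith (2 * ‖k‖₊) (phase k) := by
  refine LipschitzWith.of_dist_le_mul fun z w ↦ ?_
  have phase_sub_phase : phase k z - phase k w = phase k w * (phase k (z - w) - 1) := by
    rw [mul_sub_one, ← phase_add, add_sub_cancel]
  rw [dist_eq_norm, dist_eq_norm, phase_sub_phase, norm_mul, norm_phase, one_mul,
    phase_eq_cexp_ofReal_mul_I, mul_comm _ I]
  calc _ ≤ ‖2 * (k * (z - w)).re‖ := Real.norm_exp_I_mul_ofReal_sub_one_le
    _ = 2 * |(k * (z - w)).re| := by rw [norm_mul, Real.norm_ofNat, Real.norm_eq_abs]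
    _ ≤ 2 * ‖k * (z - w)‖ := by gcongr; exact abs_re_le_norm _
    _ = _ := by rw [norm_mul, ← mul_assoc]; rfl

lemma isHolder_phase {ε : ℝ} (hε₀ : 0 ≤ ε) (hε₁ : ε ≤ 1) : IsHolder ε (phase k) :=
  .of_lipschitzWith (lipschitzWith_phase k) (fun z ↦ (norm_phase k z).le) hε₀ hε₁

end Phase

lemma IsFirstColumn.mul_phase {ε : ℝ} {p : ℝ≥0∞} {q a b : ℂ → ℂ} {k : ℂ}
    (h : IsFirstColumn ε p q k a b) (hε₀ : 0 < ε) (hε₁ : ε ≤ 1) (hp : p ≠ 0) (hp_top : p ≠ ⊤)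
    (l : ℂ) :
    IsFirstColumn ε p (fun z ↦ q z * phase (-l) z) (k - l) a fun z ↦ phase l z * b z where
  differentiable_fst := h.differentiable_fst
  differentiable_snd := (differentiable_phase l).mul h.differentiable_snd
  wDbar_fst z := by
    rw [h.wDbar_fst]
    linear_combination -(q z * b z) * phase_neg_mul_phase l z
  wD_snd z := by
    rw [wD_mul (differentiable_phase l z) (h.differentiable_snd z), wD_phase, map_mul,
      conj_phase_neg]
    linear_combination phase l z * h.wD_snd z
  isHolderLp_fst := h.isHolderLp_fst
  isHolderLp_snd := h.isHolderLp_snd.mul_of_norm_eq_one (isHolder_phase l hε₀.le hε₁)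
    (norm_phase l) hε₀ hp hp_top

namespace IsBoundedSource

variable {K : Set ℂ} {B ε : ℝ} {p : ℝ≥0∞} {q : ℂ → ℂ}

-- `a ± b̄` solves the pseudoanalytic equation with coefficient `± q`.
lemma existsUnique_isFirstColumn_zero (hq : IsBoundedSource K B q) (hK : IsCompact K)
    (hqε : IsHolder ε q) (hε₀ : 0 < ε) (hε₁ : ε < 1) (hp : 2 < p) (hp_top : p ≠ ⊤) :
    ∃! m : (ℂ → ℂ) × (ℂ → ℂ), IsFirstColumn ε p q 0 m.1 m.2 := by
  have pseudo (c : ℝ) : ∃! u, IsNormalizedPseudoanalytic ε p (fun z ↦ c * q z) u :=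
    (hq.const_mul c).existsUnique_isNormalizedPseudoanalytic hK (hqε.const_mul c) hε₀ hε₁ hp hp_top
  refine existsUnique_of_exists_of_unique ?_ fun ⟨a, b⟩ ⟨a', b'⟩ h h' ↦ ?_
  · obtain ⟨u, hu⟩ := (pseudo 1).exists
    obtain ⟨v, hv⟩ := (pseudo (-1)).exists
    simp only [ofReal_neg, ofReal_one, one_mul, neg_mul] at hu hv
    exact ⟨(_, _), hu.isFirstColumn hv⟩
  · have combination_eq {c : ℝ} (hc : c * c = 1) (z : ℂ) :
        a z + c * conj (b z) = a' z + c * conj (b' z) :=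
      congr_fun ((pseudo c).unique (h.isNormalizedPseudoanalytic hc)
        (h'.isNormalizedPseudoanalytic hc)) z
    have plus := combination_eq (one_mul 1)
    have minus := combination_eq (neg_one_mul (-1) |>.trans (neg_neg 1))
    simp only [ofReal_neg, ofReal_one, one_mul, neg_mul] at plus minus
    refine Prod.ext (funext fun z ↦ ?_) (funext fun z ↦ star_injective ?_)
    · linear_combination (plus z + minus z) / 2
    · exact show conj (b z) = conj (b' z) by linear_combination (plus z - minus z) / 2

theorem existsUnique_isFirstColumn (hq : IsBoundedSource K B q) (hK : IsCompact K)
    (hqε : IsHolder ε q) (hε₀ : 0 < ε) (hε₁ : ε < 1) (hp : 2 < p) (hp_top : p ≠ ⊤) (k : ℂ) :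
    ∃! m : (ℂ → ℂ) × (ℂ → ℂ), IsFirstColumn ε p q k m.1 m.2 := by
  have hp₀ : p ≠ 0 := (pos_of_gt hp).ne'
  have norm_phase_le (z : ℂ) : ‖phase (-k) z‖ ≤ 1 := (norm_phase (-k) z).le
  have phase_isHolder := isHolder_phase (-k) hε₀.le hε₁.le
  have at_zero := existsUnique_isFirstColumn_zero
    (hq.mul (differentiable_phase (-k)).continuous.aestronglyMeasurable norm_phase_le) hK
    (hqε.mul phase_isHolder hq.norm_le norm_phase_le) hε₀ hε₁ hp hp_top
  refine existsUnique_of_exists_of_unique ?_ fun ⟨a, b⟩ ⟨a', b'⟩ h h' ↦ ?_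
  · obtain ⟨⟨a, b⟩, h⟩ := at_zero.exists
    have shifted := h.mul_phase hε₀ hε₁.le hp₀ hp_top (-k)
    simp only [neg_neg, mul_assoc, phase_neg_mul_phase, mul_one, zero_sub] at shifted
    exact ⟨(_, _), shifted⟩
  · have shifted {a b : ℂ → ℂ} (h : IsFirstColumn ε p q k a b) :=
      sub_self k ▸ h.mul_phase hε₀ hε₁.le hp₀ hp_top k
    obtain ⟨a_eq, b_eq⟩ := Prod.mk.inj (at_zero.unique (y₁ := (_, _)) (y₂ := (_, _)) (shifted h)
      (shifted h'))
    have phase_ne_zero (z : ℂ) : phase k z ≠ 0 := exp_ne_zero _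
    exact Prod.ext a_eq (funext fun z ↦ mul_left_cancel₀ (phase_ne_zero z) (congr_fun b_eq z))

end IsBoundedSource

/-! ### The second column of the system -/

/-- The second column `(m₁₂, m₂₂) = (c, d)` of a normalized solution `m` of the system with
potential `q` and spectral parameter `k`. -/
structure IsSecondColumn (ε : ℝ) (p : ℝ≥0∞) (q : ℂ → ℂ) (k : ℂ) (c d : ℂ → ℂ) : Prop where
  differentiable_fst : Differentiable ℝ c
  differentiable_snd : Differentiable ℝ d
  wDbar_fst : ∀ z, wDbar c z - I * k * c z = q z * d z
  wD_snd : ∀ z, wD d z = conj (q z) * c z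
  isHolderLp_fst : IsHolderLp ε p c
  isHolderLp_snd : IsHolderLp ε p fun z ↦ d z - 1

lemma IsSecondColumn.isFirstColumn_conj {ε : ℝ} {p : ℝ≥0∞} {q c d : ℂ → ℂ} {k : ℂ}
    (h : IsSecondColumn ε p q k c d) :
    IsFirstColumn ε p q (conj k) (fun z ↦ conj (d z)) fun z ↦ conj (c z) where
  differentiable_fst := h.differentiable_snd.star
  differentiable_snd := h.differentiable_fst.star
  wDbar_fst z := by rw [wDbar_conj (h.differentiable_snd z), h.wD_snd, map_mul, conj_conj]
  wD_snd z := by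
    have conj_equation := congr_arg conj (h.wDbar_fst z)
    simp only [map_sub, map_mul, conj_I] at conj_equation
    rw [wD_conj (h.differentiable_fst z)]
    linear_combination conj_equation
  isHolderLp_fst := h.isHolderLp_snd.conj_comp_sub_one
  isHolderLp_snd := h.isHolderLp_fst.conj_comp

lemma IsFirstColumn.isSecondColumn_conj {ε : ℝ} {p : ℝ≥0∞} {q a b : ℂ → ℂ} {k : ℂ}
    (h : IsFirstColumn ε p q k a b) :
    IsSecondColumn ε p q (conj k) (fun z ↦ conj (b z)) fun z ↦ conj (a z) where
  differentiable_fst := h.differentiable_snd.star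
  differentiable_snd := h.differentiable_fst.star
  wDbar_fst z := by
    have conj_equation := congr_arg conj (h.wD_snd z)
    simp only [map_add, map_mul, conj_I, conj_conj] at conj_equation
    rw [wDbar_conj (h.differentiable_snd z)]
    linear_combination conj_equation
  wD_snd z := by rw [wD_conj (h.differentiable_fst z), h.wDbar_fst, map_mul]
  isHolderLp_fst := h.isHolderLp_snd.conj_comp
  isHolderLp_snd := h.isHolderLp_fst.conj_comp_sub_one

theorem IsBoundedSource.existsUnique_isSecondColumn {K : Set ℂ} {B ε : ℝ} {p : ℝ≥0∞} {q : ℂ → ℂ}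
    (hq : IsBoundedSource K B q) (hK : IsCompact K) (hqε : IsHolder ε q) (hε₀ : 0 < ε)
    (hε₁ : ε < 1) (hp : 2 < p) (hp_top : p ≠ ⊤) (k : ℂ) :
    ∃! m : (ℂ → ℂ) × (ℂ → ℂ), IsSecondColumn ε p q k m.1 m.2 := by
  have first := hq.existsUnique_isFirstColumn hK hqε hε₀ hε₁ hp hp_top (conj k)
  refine existsUnique_of_exists_of_unique ?_ fun ⟨c, d⟩ ⟨c', d'⟩ h h' ↦ ?_
  · obtain ⟨⟨a, b⟩, h⟩ := first.exists
    exact ⟨(_, _), conj_conj k ▸ h.isSecondColumn_conj⟩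
  · obtain ⟨d_eq, c_eq⟩ := Prod.mk.inj (first.unique (y₁ := (_, _)) (y₂ := (_, _))
      h.isFirstColumn_conj h'.isFirstColumn_conj)
    exact Prod.ext (funext fun z ↦ star_injective (congr_fun c_eq z))
      (funext fun z ↦ star_injective (congr_fun d_eq z))

lemma exists_isBoundedSource_tsupport {q : ℂ → ℂ} (hq : Continuous q)
    (hq_supp : HasCompactSupport q) : ∃ B, IsBoundedSource (tsupport q) B q := by
  obtain ⟨B, hB⟩ := hq_supp.exists_bound_of_continuous hq
  exact ⟨B, hq.aestronglyMeasurable, hB, fun _ ↦ image_eq_zero_of_notMem_tsupport⟩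

/-- Existence and uniqueness of the normalized exponentially growing solutions
`m(·,k)` of the system `(D_k − Q)m = 0` for a compactly supported Hölder
continuous potential `q`, with `m − I ∈ L^r(ℂ)` componentwise and each entry
of `m − I` Hölder continuous. -/
theorem exponentially_growing_solutions_exist_unique
    (ε : ℝ) (hε0 : 0 < ε) (hε1 : ε < 1) (q : ℂ → ℂ)
    (hqsupp : HasCompactSupport q) (hqhold : IsHolder ε q)
    (r : ℝ) (hr : 2 < r) (k : ℂ) :
    ∃! m : (ℂ → ℂ) × (ℂ → ℂ) × (ℂ → ℂ) × (ℂ → ℂ),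
      -- m = (m₁₁, m₁₂, m₂₁, m₂₂)
      (Differentiable ℝ m.1 ∧ Differentiable ℝ m.2.1 ∧
        Differentiable ℝ m.2.2.1 ∧ Differentiable ℝ m.2.2.2) ∧
      (∀ z, wDbar m.1 z = q z * m.2.2.1 z) ∧
      (∀ z, wD m.2.2.1 z + Complex.I * k * m.2.2.1 z = (starRingEnd ℂ) (q z) * m.1 z) ∧
      (∀ z, wDbar m.2.1 z - Complex.I * k * m.2.1 z = q z * m.2.2.2 z) ∧
      (∀ z, wD m.2.2.2 z = (starRingEnd ℂ) (q z) * m.2.1 z) ∧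
      MemLp (fun z => m.1 z - 1) (ENNReal.ofReal r) ∧
      MemLp m.2.1 (ENNReal.ofReal r) ∧
      MemLp m.2.2.1 (ENNReal.ofReal r) ∧
      MemLp (fun z => m.2.2.2 z - 1) (ENNReal.ofReal r) ∧
      IsHolder ε (fun z => m.1 z - 1) ∧ IsHolder ε m.2.1 ∧
      IsHolder ε m.2.2.1 ∧ IsHolder ε (fun z => m.2.2.2 z - 1) := by
  obtain ⟨B, hq⟩ := exists_isBoundedSource_tsupport (hqhold.uniformContinuous hε0).continuous hqsupp
  have hp : 2 < ENNReal.ofReal r := by simpa using (ENNReal.ofReal_lt_ofReal_iff (by linarith)).2 hr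
  obtain ⟨⟨a, b⟩, first, first_unique⟩ :=
    hq.existsUnique_isFirstColumn hqsupp hqhold hε0 hε1 hp ENNReal.ofReal_ne_top k
  obtain ⟨⟨c, d⟩, second, second_unique⟩ :=
    hq.existsUnique_isSecondColumn hqsupp hqhold hε0 hε1 hp ENNReal.ofReal_ne_top k
  refine ⟨(a, c, b, d), ⟨⟨first.differentiable_fst, second.differentiable_fst,
    first.differentiable_snd, second.differentiable_snd⟩, first.wDbar_fst, first.wD_snd,
    second.wDbar_fst, second.wD_snd, first.isHolderLp_fst.memLp, second.isHolderLp_fst.memLp,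
    first.isHolderLp_snd.memLp, second.isHolderLp_snd.memLp, first.isHolderLp_fst.isHolder,
    second.isHolderLp_fst.isHolder, first.isHolderLp_snd.isHolder,
    second.isHolderLp_snd.isHolder⟩, ?_⟩
  rintro ⟨m₁₁, m₁₂, m₂₁, m₂₂⟩ ⟨⟨diff₁₁, diff₁₂, diff₂₁, diff₂₂⟩, eq₁₁, eq₂₁, eq₁₂, eq₂₂,
    Lp₁₁, Lp₁₂, Lp₂₁, Lp₂₂, holder₁₁, holder₁₂, holder₂₁, holder₂₂⟩
  obtain ⟨rfl, rfl⟩ := Prod.mk.inj (first_unique (m₁₁, m₂₁)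
    ⟨diff₁₁, diff₂₁, eq₁₁, eq₂₁, ⟨holder₁₁, Lp₁₁⟩, ⟨holder₂₁, Lp₂₁⟩⟩)
  obtain ⟨rfl, rfl⟩ := Prod.mk.inj (second_unique (m₁₂, m₂₂)
    ⟨diff₁₂, diff₂₂, eq₁₂, eq₂₂, ⟨holder₁₂, Lp₁₂⟩, ⟨holder₂₂, Lp₂₂⟩⟩)
  rfl
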